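/- (Theorem 6) The limit lim_{n→∞} (Σ_{k > n/2} a_{n,k})^{1/n} exists and equals 1/x_0, where x_0 := sup_{ζ>0} r(ζ)√ζ; moreover 2.91938 < 1/x_0 < 2.91939. -/

import Mathlib

open SimpleGraph

/-- A rooted tree on vertex set `Fin n`: a connected acyclic simple graph
with a distinguished root vertex. -/
structure RTree (n : ℕ) where
  adj : SimpleGraph (Fin n)
  connected : adj.Connected
  acyclic : adj.IsAcyclic
  root : Fin n

/-- `v` is a leaf of the rooted tree `t`: a vertex of degree one other than the
root, except that in the one-vertex tree the root counts as a leaf. -/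
def IsLeafV {n : ℕ} (t : RTree n) (v : Fin n) : Prop :=
  n = 1 ∨ ((t.adj.neighborSet v).ncard = 1 ∧ v ≠ t.root)

/-- The number of leaves of a rooted tree. -/
noncomputable def numLeaves {n : ℕ} (t : RTree n) : ℕ :=
  Nat.card {v : Fin n // IsLeafV t v}

/-- Root-preserving isomorphism of rooted trees. -/
def treeSetoid (n : ℕ) : Setoid (RTree n) where
  r t t' := ∃ e : t.adj ≃g t'.adj, e t.root = t'.root
  iseqv := by
    constructor
    · intro t; exact ⟨RelIso.refl _, rfl⟩
    · rintro t t' ⟨e, he⟩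
      exact ⟨e.symm, by rw [← he]; exact e.symm_apply_apply t.root⟩
    · rintro a b c ⟨e, he⟩ ⟨f, hf⟩
      exact ⟨e.trans f, by simp [RelIso.trans_apply, he, hf]⟩

/-- `aCount n k` : the number of isomorphism classes of rooted trees with `n`
vertices and exactly `k` leaves. -/
noncomputable def aCount (n k : ℕ) : ℕ :=
  Nat.card (Quotient (Setoid.comap
    (Subtype.val : {t : RTree n // numLeaves t = k} → RTree n)
    (treeSetoid n)))

/-- The real bivariate generating function `T(x,z) = Σ_{n,k} a_{n,k} x^n z^k`. -/
noncomputable def Treal (x z : ℝ) : ℝ :=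
  ∑' p : ℕ × ℕ, (aCount p.1 p.2 : ℝ) * x ^ p.1 * z ^ p.2

/-- `r(ζ)`, the radius of convergence in `x` of `T(x,ζ)` for `ζ > 0`. -/
noncomputable def rFun (ζ : ℝ) : ℝ :=
  sSup {x : ℝ | 0 < x ∧
    Summable (fun p : ℕ × ℕ => (aCount p.1 p.2 : ℝ) * x ^ p.1 * ζ ^ p.2)}

/-- `a_n^+ = Σ_{k > n/2} a_{n,k}`: the number of rooted trees with `n`
vertices more than half of whose vertices are leaves. -/
noncomputable def aPlusN (n : ℕ) : ℕ :=
  Nat.card (Quotient (Setoid.comap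
    (Subtype.val : {t : RTree n // n < 2 * numLeaves t} → RTree n)
    (treeSetoid n)))

/-- `x₀ = sup_{ζ>0} r(ζ)·√ζ`. -/
noncomputable def xZero : ℝ :=
  sSup {y : ℝ | ∃ ζ : ℝ, 0 < ζ ∧ y = rFun ζ * Real.sqrt ζ}

/-!
A rooted tree is determined by its Matula number, the product of `nthPrime b` over the Matula
numbers `b` of the branches at its root, so counting trees is counting positive integers, and
Pólya's functional equation for `T(x, z)` is the Euler product of a completely multiplicative
function. Finite truncations of that product turn sub- and supersolutions of the functional
equation into divergence and convergence of `T(x, z)`.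

Put `d = 2 k - n - 1` for a tree with `n` vertices and `k` leaves. Grafting two trees at a new root
adds the pairs `(n + 1, d)`, so up to a factor `2` the numbers of trees are supermultiplicative.
Hence the balanced trees (`d = 0`) grow at an exponential rate `a`, and superadditivity provides a
Lagrange multiplier `υ` for which the class `(n, d)` has at most `2 exp (n a - d υ)` trees, with `a`
the least possible exponent. Such a bound is the same as `exp (-a) ≤ r(ζ) √ζ` for `ζ = exp (2 υ)`,
so `x₀ = exp (-a)`; and since `υ ≥ 0`, the trees with `d ≥ 0` do not grow faster than the balanced
ones.
-/

section PrimeIndex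

/-- The position of the prime `p` in the increasing list of primes, counted from `1`. -/
def primeIndex (p : ℕ) : ℕ := Nat.count Nat.Prime p + 1

/-- The `b`-th prime, counted from `1`; the value at the junk index `b = 0` is `2`. -/
noncomputable def nthPrime (b : ℕ) : ℕ := Nat.nth Nat.Prime (b - 1)

theorem prime_nthPrime (b : ℕ) : (nthPrime b).Prime := Nat.prime_nth_prime _

theorem primeIndex_pos (p : ℕ) : 0 < primeIndex p := Nat.succ_pos _

theorem primeIndex_nthPrime {b : ℕ} (hb : 0 < b) : primeIndex (nthPrime b) = b := by
  rw [primeIndex, nthPrime, Nat.count_nth_of_infinite Nat.infinite_setOfPred_prime]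
  omega

theorem nthPrime_primeIndex {p : ℕ} (hp : p.Prime) : nthPrime (primeIndex p) = p := by
  rw [nthPrime, primeIndex, Nat.add_sub_cancel, Nat.nth_count hp]

theorem nthPrime_inj {a b : ℕ} (ha : 0 < a) (hb : 0 < b) : nthPrime a = nthPrime b ↔ a = b :=
  ⟨fun h => by rw [← primeIndex_nthPrime ha, h, primeIndex_nthPrime hb], congrArg nthPrime⟩

theorem lt_nthPrime (b : ℕ) : b < nthPrime b := by
  have hmono : b - 1 + 2 ≤ nthPrime b := Nat.add_two_le_nth_prime _
  omega

theorem primeIndex_lt {p : ℕ} (hp : p.Prime) : primeIndex p < p :=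
  (lt_nthPrime _).trans_eq (nthPrime_primeIndex hp)

end PrimeIndex

section Matula

theorem matula_induction {P : ℕ → Prop} (one : P 1)
    (graft : ∀ b m, 0 < b → 0 < m → P b → P m → P (nthPrime b * m)) {n : ℕ} (hn : 0 < n) : P n := by
  induction n using Nat.strong_induction_on with
  | _ n ih =>
    by_cases h1 : n = 1
    · exact h1 ▸ one
    have hp := Nat.minFac_prime h1
    obtain ⟨m, hm⟩ := Nat.minFac_dvd n
    have hm0 : 0 < m := Nat.pos_of_ne_zero fun h => by simp [h] at hm; omega
    have hmn : m < n := by nlinarith [hp.two_le]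
    have hpn : primeIndex n.minFac < n := (primeIndex_lt hp).trans_le (Nat.minFac_le hn)
    have hgraft := graft _ m (primeIndex_pos _) hm0 (ih _ hpn (primeIndex_pos _)) (ih m hmn hm0)
    rwa [nthPrime_primeIndex hp, ← hm] at hgraft

variable {M : Type*} [AddCommMonoid M]

/-- The sum of `g` over the Matula numbers of all fringe subtrees (a vertex together with its
descendants) of the rooted tree with Matula number `n`. The Matula number of a rooted tree is the
product of `nthPrime b` over the Matula numbers `b` of the branches at its root. -/
noncomputable def fringeSum (g : ℕ → M) (n : ℕ) : M :=
  g n + (n.primeFactorsList.attach.map fun p => fringeSum g (primeIndex p.1)).sum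
termination_by n
decreasing_by
  exact (primeIndex_lt (Nat.prime_of_mem_primeFactorsList p.2)).trans_le
    (Nat.le_of_mem_primeFactorsList p.2)

/-- The sum of `g` over the fringe subtrees at the non-root vertices of the tree with Matula
number `n`. -/
noncomputable def branchSum (g : ℕ → M) (n : ℕ) : M :=
  (n.primeFactorsList.map fun p => fringeSum g (primeIndex p)).sum

theorem fringeSum_eq (g : ℕ → M) (n : ℕ) : fringeSum g n = g n + branchSum g n := by
  rw [fringeSum, branchSum]
  exact congrArg (fun l => g n + List.sum l)
    (List.attach_map_val (f := fun p => fringeSum g (primeIndex p)))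

theorem branchSum_one (g : ℕ → M) : branchSum g 1 = 0 := by simp [branchSum]

theorem branchSum_mul (g : ℕ → M) {a b : ℕ} (ha : a ≠ 0) (hb : b ≠ 0) :
    branchSum g (a * b) = branchSum g a + branchSum g b := by
  rw [branchSum, ((Nat.perm_primeFactorsList_mul ha hb).map _).sum_eq, List.map_append,
    List.sum_append, branchSum, branchSum]

theorem branchSum_nthPrime (g : ℕ → M) {b : ℕ} (hb : 0 < b) :
    branchSum g (nthPrime b) = fringeSum g b := by
  simp [branchSum, Nat.primeFactorsList_prime (prime_nthPrime b), primeIndex_nthPrime hb]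

theorem branchSum_prod_nthPrime (g : ℕ → M) {ι : Type*} (s : Finset ι) {f : ι → ℕ}
    (hf : ∀ i, 0 < f i) : branchSum g (∏ i ∈ s, nthPrime (f i)) = ∑ i ∈ s, fringeSum g (f i) := by
  classical
  induction s using Finset.induction_on with
  | empty => simp [branchSum_one]
  | insert i s hi ih =>
    rw [Finset.prod_insert hi, Finset.sum_insert hi, branchSum_mul g (prime_nthPrime _).ne_zero
      (Finset.prod_ne_zero_iff.mpr fun j _ => (prime_nthPrime _).ne_zero),
      branchSum_nthPrime g (hf i), ih]

theorem branchSum_mono {f g : ℕ → ℕ} (hfg : f ≤ g) (n : ℕ) : branchSum f n ≤ branchSum g n := by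
  induction n using Nat.strong_induction_on with
  | _ n ih =>
    refine List.sum_le_sum fun p hp => ?_
    rw [fringeSum_eq, fringeSum_eq]
    exact add_le_add (hfg _) (ih _ ((primeIndex_lt (Nat.prime_of_mem_primeFactorsList hp)).trans_le
      (Nat.le_of_mem_primeFactorsList hp)))

/-- The number of vertices of the rooted tree with Matula number `n`. -/
noncomputable def matulaSize : ℕ → ℕ := fringeSum fun _ => 1

/-- The number of leaves of the rooted tree with Matula number `n`. -/
noncomputable def matulaLeaves : ℕ → ℕ := fringeSum fun m => if m = 1 then 1 else 0

theorem matulaSize_one : matulaSize 1 = 1 := by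
  rw [matulaSize, fringeSum_eq, branchSum_one, add_zero]

theorem matulaLeaves_one : matulaLeaves 1 = 1 := by
  rw [matulaLeaves, fringeSum_eq, branchSum_one, if_pos rfl, add_zero]

theorem matulaSize_nthPrime {b : ℕ} (hb : 0 < b) : matulaSize (nthPrime b) = 1 + matulaSize b := by
  rw [matulaSize, fringeSum_eq, branchSum_nthPrime _ hb]

theorem matulaLeaves_nthPrime {b : ℕ} (hb : 0 < b) :
    matulaLeaves (nthPrime b) = matulaLeaves b := by
  rw [matulaLeaves, fringeSum_eq, branchSum_nthPrime _ hb, if_neg (prime_nthPrime b).ne_one,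
    zero_add]

theorem matulaSize_mul {a b : ℕ} (ha : a ≠ 0) (hb : b ≠ 0) :
    matulaSize (a * b) + 1 = matulaSize a + matulaSize b := by
  simp only [matulaSize, fringeSum_eq, branchSum_mul _ ha hb]
  omega

theorem matulaLeaves_mul {a b : ℕ} (ha : 1 < a) (hb : 1 < b) :
    matulaLeaves (a * b) = matulaLeaves a + matulaLeaves b := by
  have hab : a * b ≠ 1 := (Nat.mul_lt_mul'' ha hb).ne'
  simp only [matulaLeaves, fringeSum_eq, if_neg hab, if_neg ha.ne', if_neg hb.ne', zero_add,
    branchSum_mul _ (by omega : a ≠ 0) (by omega : b ≠ 0)]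

theorem matulaLeaves_le_matulaSize (n : ℕ) : matulaLeaves n ≤ matulaSize n := by
  rw [matulaLeaves, matulaSize, fringeSum_eq, fringeSum_eq]
  exact add_le_add (by split_ifs <;> omega)
    (branchSum_mono (fun m => by dsimp only; split_ifs <;> omega) n)

theorem matulaLeaves_pos {n : ℕ} (hn : 0 < n) : 0 < matulaLeaves n := by
  refine matula_induction (P := fun n => 0 < matulaLeaves n)
    (by rw [matulaLeaves_one]; exact one_pos) (fun b m hb hm ihb _ => ?_) hn
  rw [matulaLeaves, fringeSum_eq, branchSum_mul _ (prime_nthPrime b).ne_zero hm.ne',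
    branchSum_nthPrime _ hb]
  exact Nat.add_pos_right _ (Nat.add_pos_left ihb _)

end Matula

/-- A rooted tree on the vertex set `V`, encoded by its parent map; the value of `parent` at the
root is junk. The depth map witnesses that iterating `parent` reaches the root. -/
structure ParentTree (V : Type*) where
  root : V
  parent : V → V
  depth : V → ℕ
  depth_root : depth root = 0
  depth_parent : ∀ v, v ≠ root → depth (parent v) + 1 = depth v

namespace ParentTree

section Children

variable {V : Type*} (t : ParentTree V)

/-- `t.IsChild c v` says that the edge leaving the vertex `c` towards the root ends at `v`. -/
def IsChild (c v : V) : Prop := c ≠ t.root ∧ t.parent c = v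

variable {t}

theorem IsChild.depth_eq {c v : V} (h : t.IsChild c v) : t.depth c = t.depth v + 1 := by
  rw [← t.depth_parent c h.1, h.2]

theorem isChild_parent {v : V} (hv : v ≠ t.root) : t.IsChild v (t.parent v) := ⟨hv, rfl⟩

theorem depth_eq_zero_iff {v : V} : t.depth v = 0 ↔ v = t.root := by
  refine ⟨fun h => ?_, fun h => h ▸ t.depth_root⟩
  by_contra hv
  have := t.depth_parent v hv
  omega

theorem induction_from_root {P : V → Prop} (root : P t.root)
    (child : ∀ c v, t.IsChild c v → P v → P c) (v : V) : P v := by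
  induction hd : t.depth v generalizing v with
  | zero => exact depth_eq_zero_iff.mp hd ▸ root
  | succ d ih =>
    have hv : v ≠ t.root := fun h => by simp [h, t.depth_root] at hd
    have hparent := t.depth_parent v hv
    exact child v _ (isChild_parent hv) (ih _ (by omega))

theorem exists_recursion_from_root (t : ParentTree V) {W : Type*} (w₀ : W) (σ : V → W → W) :
    ∃ φ : V → W, φ t.root = w₀ ∧ ∀ c v, t.IsChild c v → φ c = σ c (φ v) := by
  classical
  have hwf : WellFounded fun v c => t.IsChild c v :=
    Subrelation.wf (r := InvImage (· < ·) t.depth)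
      (fun {v c} h => show t.depth v < t.depth c by rw [h.depth_eq]; omega)
      (InvImage.wf _ wellFounded_lt)
  refine ⟨hwf.fix fun c rec => if hc : c = t.root then w₀
    else σ c (rec (t.parent c) (isChild_parent hc)), ?_, ?_⟩
  · rw [WellFounded.fix_eq, dif_pos rfl]
  · rintro c v ⟨hc, rfl⟩
    rw [WellFounded.fix_eq, dif_neg hc]

theorem wellFounded_isChild [Finite V] (t : ParentTree V) : WellFounded t.IsChild := by
  obtain ⟨D, hD⟩ := (Set.finite_range t.depth).bddAbove
  refine Subrelation.wf (r := InvImage (· < ·) fun v => D - t.depth v) (fun {c v} h => ?_)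
    (InvImage.wf _ wellFounded_lt)
  have hc : t.depth c ≤ D := hD ⟨c, rfl⟩
  have hcv := h.depth_eq
  change D - t.depth c < D - t.depth v
  omega

end Children

section Code

variable {V : Type*} [Fintype V] (t : ParentTree V)

open scoped Classical in
/-- The finset of children of a vertex. -/
noncomputable def children (v : V) : Finset V := {c ∈ Finset.univ.erase t.root | t.parent c = v}

variable {t} in
theorem mem_children {c v : V} : c ∈ t.children v ↔ t.IsChild c v := by
  simp [children, IsChild]

/-- The Matula number of the fringe subtree at a vertex. -/
noncomputable def code : V → ℕ :=
  t.wellFounded_isChild.fix fun v rec =>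
    ∏ c ∈ (t.children v).attach, nthPrime (rec c (mem_children.mp c.2))

theorem code_eq (v : V) : t.code v = ∏ c ∈ t.children v, nthPrime (t.code c) := by
  rw [code, WellFounded.fix_eq]
  exact Finset.prod_attach _ fun c => nthPrime (t.code c)

variable {t} in
theorem eq_code {κ : V → ℕ} (hκ : ∀ v, κ v = ∏ c ∈ t.children v, nthPrime (κ c)) (v : V) :
    κ v = t.code v := by
  induction v using t.wellFounded_isChild.induction with
  | _ v ih =>
    rw [hκ, code_eq]
    exact Finset.prod_congr rfl fun c hc => by rw [ih c (mem_children.mp hc)]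

theorem code_pos (v : V) : 0 < t.code v := by
  rw [code_eq]
  exact Finset.prod_pos fun c _ => (prime_nthPrime _).pos

theorem code_eq_one_iff (v : V) : t.code v = 1 ↔ ∀ c, ¬ t.IsChild c v := by
  rw [code_eq]
  refine ⟨fun h c hc => ?_, fun h => Finset.prod_eq_one fun c hc => (h c (mem_children.mp hc)).elim⟩
  exact (prime_nthPrime _).ne_one (Finset.prod_eq_one_iff.mp h c (mem_children.mpr hc))

theorem factorization_code (v : V) {b : ℕ} (hb : 0 < b) :
    (t.code v).factorization (nthPrime b) = Nat.card {c : t.children v // t.code c = b} := by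
  classical
  have hfactor (c : V) :
      (nthPrime (t.code c)).factorization (nthPrime b) = if t.code c = b then 1 else 0 := by
    rw [(prime_nthPrime _).factorization, Finsupp.single_apply]
    exact if_congr (nthPrime_inj (t.code_pos c) hb) rfl rfl
  rw [code_eq, Nat.factorization_prod fun c _ => (prime_nthPrime _).ne_zero, Finset.sum_apply',
    Finset.sum_congr rfl fun c _ => hfactor c, Nat.card_eq_fintype_card, Fintype.card_subtype,
    Finset.card_filter]
  exact (Finset.sum_attach _ fun c => if t.code c = b then 1 else 0).symm

theorem sum_sum_children {M : Type*} [AddCommMonoid M] (f : V → M) :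
    f t.root + ∑ v, ∑ c ∈ t.children v, f c = ∑ v, f v := by
  classical
  rw [← Finset.add_sum_erase _ f (Finset.mem_univ t.root)]
  exact congrArg _ (Finset.sum_fiberwise _ t.parent f)

theorem fringeSum_code_root {M : Type*} [AddCancelCommMonoid M] (g : ℕ → M) :
    fringeSum g (t.code t.root) = ∑ v, g (t.code v) := by
  have hvertex (v : V) : fringeSum g (t.code v) =
      g (t.code v) + ∑ c ∈ t.children v, fringeSum g (t.code c) := by
    rw [fringeSum_eq]
    conv_lhs => enter [2, 2]; rw [code_eq]
    rw [branchSum_prod_nthPrime g _ t.code_pos]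
  have htotal := t.sum_sum_children fun v => fringeSum g (t.code v)
  rw [Finset.sum_congr rfl fun v _ => hvertex v, Finset.sum_add_distrib] at htotal
  exact add_right_cancel htotal

theorem matulaSize_code_root : matulaSize (t.code t.root) = Fintype.card V := by
  rw [matulaSize, fringeSum_code_root, Finset.sum_const, smul_eq_mul, mul_one, Finset.card_univ]

theorem matulaLeaves_code_root :
    matulaLeaves (t.code t.root) = Nat.card {v : V // ∀ c, ¬ t.IsChild c v} := by
  classical
  rw [matulaLeaves, fringeSum_code_root, Nat.card_eq_fintype_card, Fintype.card_subtype,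
    Finset.card_filter]
  exact Finset.sum_congr rfl fun v _ => if_congr (t.code_eq_one_iff v) rfl rfl

end Code

section Hom

variable {V W : Type*} {t : ParentTree V} {s : ParentTree W} {φ : V → W}

/-- Homomorphisms of rooted trees: they preserve the root and the child relation. An equivalence
with this property is an isomorphism, see `isChild_iff`. -/
structure IsHom (t : ParentTree V) (s : ParentTree W) (φ : V → W) : Prop where
  map_root : φ t.root = s.root
  map_isChild : ∀ c v, t.IsChild c v → s.IsChild (φ c) (φ v)

theorem IsHom.depth_eq (h : t.IsHom s φ) (v : V) : s.depth (φ v) = t.depth v := by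
  refine t.induction_from_root (P := fun v => s.depth (φ v) = t.depth v) ?_
    (fun c v hc ih => ?_) v
  · rw [h.map_root, t.depth_root, s.depth_root]
  · rw [(h.map_isChild c v hc).depth_eq, ih, hc.depth_eq]

theorem IsHom.isChild_iff (h : t.IsHom s φ) (hφ : φ.Injective) (c v : V) :
    s.IsChild (φ c) (φ v) ↔ t.IsChild c v := by
  refine ⟨fun hc => ?_, h.map_isChild c v⟩
  have hroot : c ≠ t.root := fun hc' => hc.1 (hc' ▸ h.map_root)
  have hparent := h.map_isChild c _ (isChild_parent hroot)
  exact ⟨hroot, hφ (hparent.2.symm.trans hc.2)⟩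

theorem IsHom.injective (h : t.IsHom s φ) (hφ : ∀ v, Set.InjOn φ {c | t.IsChild c v}) :
    φ.Injective := by
  intro a
  refine t.induction_from_root (P := fun a => ∀ ⦃b⦄, φ a = φ b → a = b) (fun b hb => ?_)
    (fun a v ha ih b hb => ?_) a
  · have hdepth := h.depth_eq b
    rw [← hb, h.depth_eq, t.depth_root] at hdepth
    exact (depth_eq_zero_iff.mp hdepth.symm).symm
  · have hdepth : t.depth a = t.depth b := by rw [← h.depth_eq, hb, h.depth_eq]
    have hroot : b ≠ t.root := fun hb' => by
      rw [ha.depth_eq, hb', t.depth_root] at hdepth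
      omega
    have hchild := h.map_isChild b _ (isChild_parent hroot)
    have hparent : v = t.parent b := ih (by rw [← (h.map_isChild a v ha).2, hb, hchild.2])
    exact hφ v ha ⟨hroot, hparent.symm⟩ hb

variable [Fintype V] [Fintype W]

theorem IsHom.code_eq {e : V ≃ W} (h : t.IsHom s e) (v : V) : s.code (e v) = t.code v := by
  refine eq_code (κ := fun v => s.code (e v)) (fun v => ?_) v
  rw [ParentTree.code_eq]
  refine (Finset.prod_bij (fun c _ => e c) (fun c hc => ?_) (fun _ _ _ _ hab => e.injective hab)
    (fun c hc => ⟨e.symm c, ?_, e.apply_symm_apply c⟩) fun _ _ => rfl).symm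
  · exact mem_children.mpr (h.map_isChild c v (mem_children.mp hc))
  · rw [mem_children, ← h.isChild_iff e.injective, e.apply_symm_apply]
    exact mem_children.mp hc

theorem exists_children_injection (t : ParentTree V) (s : ParentTree W) {v : V} {w : W}
    (h : t.code v = s.code w) :
    ∃ σ : V → W, (∀ c, t.IsChild c v → s.IsChild (σ c) w ∧ s.code (σ c) = t.code c) ∧
      Set.InjOn σ {c | t.IsChild c v} := by
  classical
  have hfiber (b : ℕ) : Nonempty ({c : t.children v // t.code c = b} ≃
      {c : s.children w // s.code c = b}) := by
    obtain rfl | hb := b.eq_zero_or_pos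
    · have : IsEmpty {c : t.children v // t.code c = 0} := ⟨fun c => (t.code_pos _).ne' c.2⟩
      have : IsEmpty {c : s.children w // s.code c = 0} := ⟨fun c => (s.code_pos _).ne' c.2⟩
      exact ⟨Equiv.equivOfIsEmpty _ _⟩
    · exact Finite.card_eq.mp (by rw [← factorization_code t v hb, ← factorization_code s w hb, h])
  let e : t.children v ≃ s.children w := Equiv.ofFiberEquiv (f := fun c => t.code c)
    (g := fun c => s.code c) fun b => (hfiber b).some
  have he (c : t.children v) : s.code (e c) = t.code c :=
    Equiv.ofFiberEquiv_map (g := fun c : s.children w => s.code c) _ c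
  refine ⟨fun c => if hc : t.IsChild c v then e ⟨c, mem_children.mpr hc⟩ else w,
    fun c hc => ?_, fun a ha b hb hab => ?_⟩
  · simp only [dif_pos hc]
    exact ⟨mem_children.mp (e _).2, he _⟩
  · simp only [dif_pos (show t.IsChild a v from ha), dif_pos (show t.IsChild b v from hb)] at hab
    exact congrArg Subtype.val (e.injective (Subtype.ext hab))

theorem exists_isHom_injOn (h : t.code t.root = s.code s.root) :
    ∃ φ : V → W, t.IsHom s φ ∧ ∀ v, Set.InjOn φ {c | t.IsChild c v} := by
  have : Nonempty W := ⟨s.root⟩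
  choose! σ hσ hσinj using fun v w => t.exists_children_injection s (v := v) (w := w)
  obtain ⟨φ, hroot, hchild⟩ :=
    t.exists_recursion_from_root s.root fun c w => σ (t.parent c) w c
  have hφ (c v : V) (hc : t.IsChild c v) : φ c = σ v (φ v) c := by rw [hchild c v hc, hc.2]
  have hcode (v : V) : t.code v = s.code (φ v) := by
    refine t.induction_from_root (P := fun v => t.code v = s.code (φ v))
      (by rw [hroot, h]) (fun c v hc ih => ?_) v
    rw [hφ c v hc, (hσ v (φ v) ih c hc).2]
  refine ⟨φ, ⟨hroot, fun c v hc => ?_⟩, fun v => (hσinj v (φ v) (hcode v)).congr fun c hc => ?_⟩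
  · rw [hφ c v hc]
    exact (hσ v (φ v) (hcode v) c hc).1
  · exact (hφ c v hc).symm

theorem exists_equiv_isHom (h : t.code t.root = s.code s.root) : ∃ e : V ≃ W, t.IsHom s e := by
  obtain ⟨φ, hφ, hinj⟩ := exists_isHom_injOn h
  have hcard : Fintype.card V = Fintype.card W := by
    rw [← matulaSize_code_root t, h, matulaSize_code_root]
  exact ⟨Equiv.ofBijective φ
    ((Fintype.bijective_iff_injective_and_card φ).mpr ⟨hφ.injective hinj, hcard⟩), hφ⟩

end Hom

section Realization

variable {V W : Type*}

/-- The tree with one vertex. -/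
def single : ParentTree Unit := ⟨(), id, fun _ => 0, rfl, fun _ h => (h rfl).elim⟩

open scoped Classical in
/-- The tree obtained from `t` by adding `s` as a further branch at the root. -/
noncomputable def graft (t : ParentTree V) (s : ParentTree W) : ParentTree (V ⊕ W) where
  root := Sum.inl t.root
  parent := Sum.elim (fun v => Sum.inl (t.parent v))
    fun w => if w = s.root then Sum.inl t.root else Sum.inr (s.parent w)
  depth := Sum.elim t.depth fun w => s.depth w + 1
  depth_root := t.depth_root
  depth_parent := by
    rintro (v | w) h
    · exact t.depth_parent v fun hv => h (congrArg Sum.inl hv)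
    · by_cases hw : w = s.root
      · simp [hw, t.depth_root, s.depth_root]
      · simp [hw, s.depth_parent w hw]

/-- The tree structure transported along an equivalence of vertex sets. -/
def transport (t : ParentTree V) (e : V ≃ W) : ParentTree W where
  root := e t.root
  parent w := e (t.parent (e.symm w))
  depth w := t.depth (e.symm w)
  depth_root := by rw [e.symm_apply_apply, t.depth_root]
  depth_parent w h := by
    rw [e.symm_apply_apply]
    exact t.depth_parent _ fun hw => h (e.symm_apply_eq.mp hw)

theorem isHom_transport (t : ParentTree V) (e : V ≃ W) : t.IsHom (t.transport e) e where
  map_root := rfl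
  map_isChild c v h :=
    ⟨fun hc => h.1 (e.injective hc), by simp only [transport, e.symm_apply_apply, h.2]⟩

variable [Fintype V] [Fintype W]

open scoped Classical in
theorem children_graft_inl (t : ParentTree V) (s : ParentTree W) (v : V) :
    (t.graft s).children (Sum.inl v) =
      (t.children v).disjSum (if v = t.root then {s.root} else ∅) := by
  ext (c | c)
  · simp [mem_children, IsChild, graft]
  · by_cases hc : c = s.root <;> by_cases hv : v = t.root <;>
      simp [mem_children, IsChild, graft, hc, hv, eq_comm]

theorem children_graft_inr (t : ParentTree V) (s : ParentTree W) (w : W) :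
    (t.graft s).children (Sum.inr w) = (∅ : Finset V).disjSum (s.children w) := by
  ext (c | c)
  · simp [mem_children, IsChild, graft]
  · by_cases hc : c = s.root <;> simp [mem_children, IsChild, graft, hc]

theorem code_graft_root (t : ParentTree V) (s : ParentTree W) :
    (t.graft s).code (t.graft s).root = nthPrime (s.code s.root) * t.code t.root := by
  classical
  have hcode := eq_code (t := t.graft s)
    (κ := Sum.elim (fun v => (if v = t.root then nthPrime (s.code s.root) else 1) * t.code v)
      s.code) ?_ (t.graft s).root
  · rw [← hcode]
    simp [graft]
  · rintro (v | w)
    · rw [children_graft_inl, Finset.prod_disjSum]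
      simp only [Sum.elim_inl, Sum.elim_inr]
      rw [mul_comm, code_eq]
      refine congrArg₂ _ (Finset.prod_congr rfl fun c hc => ?_) ?_
      · rw [if_neg (mem_children.mp hc).1, one_mul]
      · split_ifs <;> simp
    · rw [children_graft_inr, Finset.prod_disjSum, Finset.prod_empty, one_mul]
      exact code_eq s w

theorem exists_type_code_root_eq {m : ℕ} (hm : 0 < m) :
    ∃ (V : Type) (_ : Fintype V) (t : ParentTree V), t.code t.root = m := by
  refine matula_induction (P := fun m => ∃ (V : Type) (_ : Fintype V) (t : ParentTree V),
    t.code t.root = m) ⟨Unit, inferInstance, single, ?_⟩ ?_ hm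
  · rw [code_eq_one_iff]
    exact fun c hc => hc.1 rfl
  · rintro b m - - ⟨W, _, s, rfl⟩ ⟨V, _, t, rfl⟩
    exact ⟨V ⊕ W, inferInstance, t.graft s, code_graft_root t s⟩

theorem exists_code_root_eq {m : ℕ} (hm : 0 < m) :
    ∃ t : ParentTree (Fin (matulaSize m)), t.code t.root = m := by
  obtain ⟨V, _, t, rfl⟩ := exists_type_code_root_eq hm
  let e := Fintype.equivFinOfCardEq t.matulaSize_code_root.symm
  exact ⟨t.transport e, (t.isHom_transport e).code_eq t.root⟩

end Realization

end ParentTree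

namespace ParentTree

section Graph

variable {V W : Type*}

/-- The undirected graph of a rooted tree. -/
def graph (t : ParentTree V) : SimpleGraph V where
  Adj a b := t.IsChild a b ∨ t.IsChild b a
  symm := ⟨fun _ _ h => h.symm⟩
  loopless := ⟨fun a h => by
    have hchild : t.IsChild a a := h.elim id id
    have hdepth := hchild.depth_eq
    omega⟩

theorem connected_graph (t : ParentTree V) : t.graph.Connected := by
  have hroot (v : V) : t.graph.Reachable v t.root := by
    refine t.induction_from_root (P := fun v => t.graph.Reachable v t.root) (.refl _)
      (fun c v hc ih => ?_) v
    exact (show t.graph.Adj c v from Or.inl hc).reachable.trans ih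
  have : Nonempty V := ⟨t.root⟩
  exact ⟨fun a b => (hroot a).trans (hroot b).symm⟩

theorem bijective_parent_edge (t : ParentTree V) :
    Function.Bijective fun v : {v // v ≠ t.root} =>
      (⟨s(v.1, t.parent v), Or.inl (isChild_parent v.2)⟩ : t.graph.edgeSet) := by
  constructor
  · rintro ⟨a, ha⟩ ⟨b, hb⟩ hab
    obtain ⟨rfl, -⟩ | ⟨hab, hba⟩ := Sym2.eq_iff.mp (congrArg Subtype.val hab)
    · rfl
    · have hadepth := t.depth_parent a ha
      have hbdepth := t.depth_parent b hb
      simp only at hab hba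
      rw [hba] at hadepth
      rw [← hab] at hbdepth
      omega
  · rintro ⟨e, he⟩
    induction e using Sym2.ind with
    | _ a b =>
      obtain ha | hb := he
      · exact ⟨⟨a, ha.1⟩, Subtype.ext (Sym2.eq_iff.mpr (Or.inl ⟨rfl, ha.2⟩))⟩
      · exact ⟨⟨b, hb.1⟩, Subtype.ext (Sym2.eq_iff.mpr (Or.inr ⟨rfl, hb.2⟩))⟩

theorem isTree_graph [Finite V] (t : ParentTree V) : t.graph.IsTree := by
  classical
  have := Fintype.ofFinite V
  rw [isTree_iff_connected_and_card]
  refine ⟨t.connected_graph, ?_⟩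
  rw [← Nat.card_eq_of_bijective _ t.bijective_parent_edge, Nat.card_eq_fintype_card,
    Nat.card_eq_fintype_card, Fintype.card_subtype_compl, Fintype.card_subtype_eq]
  exact Nat.sub_add_cancel (Fintype.card_pos_iff.mpr ⟨t.root⟩)

theorem isHom_of_graph_iso {t : ParentTree V} {s : ParentTree W} (e : t.graph ≃g s.graph)
    (he : e t.root = s.root) : t.IsHom s e := by
  refine ⟨he, fun c => ?_⟩
  refine t.induction_from_root (P := fun c => ∀ v, t.IsChild c v → s.IsChild (e c) (e v))
    (fun v h => (h.1 rfl).elim) (fun c v hc ih v' hc' => ?_) c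
  obtain rfl : v = v' := hc.2.symm.trans hc'.2
  have hadj : t.graph.Adj c v := Or.inl hc
  refine (e.map_rel_iff.mpr hadj).resolve_right fun hv => ?_
  have hvroot : v ≠ t.root := fun h => hv.1 (h ▸ he)
  have hgrandparent := ih _ (isChild_parent hvroot)
  have hparent : t.parent v = c := e.injective (hgrandparent.2.symm.trans hv.2)
  have hcdepth := hc.depth_eq
  have hvdepth := (show t.IsChild v c from ⟨hvroot, hparent⟩).depth_eq
  omega

theorem IsHom.exists_graph_iso {t : ParentTree V} {s : ParentTree W} {e : V ≃ W}
    (h : t.IsHom s e) : ∃ e' : t.graph ≃g s.graph, e' t.root = s.root :=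
  ⟨⟨e, or_congr (h.isChild_iff e.injective _ _) (h.isChild_iff e.injective _ _)⟩, h.map_root⟩

theorem ncard_neighborSet_eq_one_iff {t : ParentTree V} {v : V} (hv : v ≠ t.root) :
    (t.graph.neighborSet v).ncard = 1 ↔ ∀ c, ¬ t.IsChild c v := by
  have hparent : t.parent v ∈ t.graph.neighborSet v := Or.inl (isChild_parent hv)
  refine ⟨fun h c hc => ?_, fun h => Set.ncard_eq_one.mpr ⟨t.parent v,
    Set.eq_singleton_iff_unique_mem.mpr ⟨hparent, fun c hc => ?_⟩⟩⟩
  · obtain ⟨a, ha⟩ := Set.ncard_eq_one.mp h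
    have hchild : c ∈ t.graph.neighborSet v := Or.inr hc
    rw [ha, Set.mem_singleton_iff] at hparent hchild
    have hvdepth := t.depth_parent v hv
    have hcdepth := hc.depth_eq
    rw [hparent, ← hchild] at hvdepth
    omega
  · exact (hc.resolve_right (h c)).2.symm

end Graph

end ParentTree

section TreeGraph

variable {V : Type*} {G : SimpleGraph V}

theorem exists_adj_and_dist_add_one_eq (hG : G.IsTree) {r v : V} (hv : v ≠ r) :
    ∃ w, G.Adj w v ∧ G.dist r w + 1 = G.dist r v := by
  obtain ⟨p, -, hp⟩ := hG.connected.exists_path_of_dist r v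
  have hadj := p.adj_penultimate (Walk.not_nil_of_ne hv.symm)
  refine ⟨p.penultimate, hadj, ?_⟩
  have hle := G.dist_le p.dropLast
  rw [Walk.length_dropLast, hp] at hle
  obtain h | h := hG.dist_eq_dist_add_one_of_adj r hadj <;> omega

theorem eq_of_adj_of_dist_add_one_eq (hG : G.IsTree) {r v w w' : V} (hw : G.Adj w v)
    (hdist : G.dist r w + 1 = G.dist r v) (hw' : G.Adj w' v)
    (hdist' : G.dist r w' + 1 = G.dist r v) : w = w' := by
  obtain ⟨p, -, hp⟩ := hG.connected.exists_path_of_dist r w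
  obtain ⟨p', -, hp'⟩ := hG.connected.exists_path_of_dist r w'
  have hpath : (p.concat hw).IsPath :=
    Walk.isPath_of_length_eq_dist _ (by rw [Walk.length_concat, hp, hdist])
  have hpath' : (p'.concat hw').IsPath :=
    Walk.isPath_of_length_eq_dist _ (by rw [Walk.length_concat, hp', hdist'])
  have heq := (hG.existsUnique_path r v).unique hpath hpath'
  rw [← Walk.penultimate_concat p hw, heq, Walk.penultimate_concat]

theorem exists_parentTree_graph_eq (hG : G.IsTree) (r : V) :
    ∃ t : ParentTree V, t.root = r ∧ t.graph = G := by
  have : Nonempty V := ⟨r⟩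
  choose! parent hadj hdist using fun v => exists_adj_and_dist_add_one_eq hG (r := r) (v := v)
  refine ⟨⟨r, parent, G.dist r, G.dist_self, hdist⟩, rfl, ?_⟩
  ext a b
  constructor
  · rintro (⟨ha, rfl⟩ | ⟨hb, rfl⟩)
    · exact (hadj a ha).symm
    · exact hadj b hb
  · have hchild {c v : V} (h : G.Adj v c) (hd : G.dist r c = G.dist r v + 1) :
        c ≠ r ∧ parent c = v := by
      have hc : c ≠ r := fun hc => by simp [hc] at hd
      exact ⟨hc, eq_of_adj_of_dist_add_one_eq hG (hadj c hc) (hdist c hc) h hd.symm⟩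
    exact fun h => (hG.dist_eq_dist_add_one_of_adj r h).imp (hchild h.symm) (hchild h)

end TreeGraph

namespace RTree

variable {n : ℕ}

theorem exists_parentTree (t : RTree n) :
    ∃ s : ParentTree (Fin n), s.root = t.root ∧ s.graph = t.adj :=
  exists_parentTree_graph_eq ⟨t.connected, t.acyclic⟩ t.root

/-- The parent map encoding of a rooted tree. -/
noncomputable def parentTree (t : RTree n) : ParentTree (Fin n) := t.exists_parentTree.choose

theorem root_parentTree (t : RTree n) : t.parentTree.root = t.root :=
  t.exists_parentTree.choose_spec.1

theorem graph_parentTree (t : RTree n) : t.parentTree.graph = t.adj :=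
  t.exists_parentTree.choose_spec.2

/-- The Matula number of a rooted tree, a complete isomorphism invariant. -/
noncomputable def matula (t : RTree n) : ℕ := t.parentTree.code t.parentTree.root

theorem matula_pos (t : RTree n) : 0 < t.matula := ParentTree.code_pos _ _

theorem matulaSize_matula (t : RTree n) : matulaSize t.matula = n := by
  rw [matula, ParentTree.matulaSize_code_root, Fintype.card_fin]

theorem isLeafV_iff (t : RTree n) (v : Fin n) :
    IsLeafV t v ↔ ∀ c, ¬ t.parentTree.IsChild c v := by
  rw [IsLeafV, ← graph_parentTree, ← root_parentTree]
  by_cases hv : v = t.parentTree.root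
  · subst hv
    rw [← ParentTree.code_eq_one_iff]
    refine ⟨?_, fun h => Or.inl ?_⟩
    · rintro (rfl | ⟨-, h⟩)
      · exact (ParentTree.code_eq_one_iff _ _).mpr fun c hc => hc.1 (Subsingleton.elim _ _)
      · exact (h rfl).elim
    · rw [← t.matulaSize_matula, matula, h, matulaSize_one]
  · have hn : n ≠ 1 := by
      rintro rfl
      exact hv (Subsingleton.elim _ _)
    rw [ParentTree.ncard_neighborSet_eq_one_iff hv]
    simp only [hn, false_or, ne_eq, hv, not_false_eq_true, and_true]

theorem matulaLeaves_matula (t : RTree n) : matulaLeaves t.matula = numLeaves t := by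
  rw [matula, ParentTree.matulaLeaves_code_root, numLeaves]
  exact Nat.card_congr (Equiv.subtypeEquivRight fun v => (t.isLeafV_iff v).symm)

theorem matula_eq_iff (t s : RTree n) : t.matula = s.matula ↔ treeSetoid n t s := by
  change _ ↔ ∃ e : t.adj ≃g s.adj, e t.root = s.root
  rw [← graph_parentTree t, ← graph_parentTree s, ← root_parentTree t, ← root_parentTree s]
  constructor
  · intro h
    obtain ⟨e, he⟩ := ParentTree.exists_equiv_isHom h
    exact he.exists_graph_iso
  · rintro ⟨e, he⟩
    have hhom : t.parentTree.IsHom s.parentTree e.toEquiv := ParentTree.isHom_of_graph_iso e he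
    rw [matula, matula, ← hhom.code_eq, hhom.map_root]

theorem exists_matula_eq {m : ℕ} (hm : 0 < m) : ∃ t : RTree (matulaSize m), t.matula = m := by
  obtain ⟨s, hs⟩ := ParentTree.exists_code_root_eq hm
  let t : RTree (matulaSize m) :=
    ⟨s.graph, s.isTree_graph.connected, s.isTree_graph.isAcyclic, s.root⟩
  refine ⟨t, ?_⟩
  have hhom : t.parentTree.IsHom s (Equiv.refl _) := by
    have hgraph : t.parentTree.graph = s.graph := t.graph_parentTree
    exact ParentTree.isHom_of_graph_iso ⟨Equiv.refl _, by rw [hgraph]; rfl⟩ t.root_parentTree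
  rw [matula, ← hhom.code_eq, hhom.map_root, hs]

instance : Finite (RTree n) := by
  refine Finite.of_injective (fun t : RTree n => (t.adj, t.root)) ?_
  rintro ⟨G, _, _, r⟩ ⟨H, _, _, s⟩ h
  obtain ⟨rfl, rfl⟩ := Prod.mk.inj h
  rfl

end RTree

section Counting

theorem finite_setOf_matulaSize_eq (n : ℕ) : {m : ℕ | 0 < m ∧ matulaSize m = n}.Finite := by
  refine (Set.finite_range fun t : RTree n => t.matula).subset ?_
  rintro m ⟨hm, rfl⟩
  exact RTree.exists_matula_eq hm

theorem card_quotient_eq_card_matula (n : ℕ) (P : ℕ → Prop) :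
    Nat.card (Quotient (Setoid.comap
      (Subtype.val : {t : RTree n // P (numLeaves t)} → RTree n) (treeSetoid n))) =
    Nat.card {m : ℕ // 0 < m ∧ matulaSize m = n ∧ P (matulaLeaves m)} := by
  refine Nat.card_eq_of_bijective (Quotient.lift
    (fun t : {t : RTree n // P (numLeaves t)} =>
      (⟨t.1.matula, t.1.matula_pos, t.1.matulaSize_matula, t.1.matulaLeaves_matula ▸ t.2⟩ :
        {m : ℕ // 0 < m ∧ matulaSize m = n ∧ P (matulaLeaves m)}))
    fun a b h => Subtype.ext ((RTree.matula_eq_iff _ _).mpr h)) ⟨?_, ?_⟩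
  · rintro ⟨a⟩ ⟨b⟩ h
    exact Quotient.sound ((RTree.matula_eq_iff _ _).mp (congrArg Subtype.val h))
  · rintro ⟨m, hm, rfl, hP⟩
    obtain ⟨t, ht⟩ := RTree.exists_matula_eq hm
    rw [← ht, t.matulaLeaves_matula] at hP
    exact ⟨Quotient.mk _ ⟨t, hP⟩, Subtype.ext ht⟩

theorem aCount_eq_card (n k : ℕ) :
    aCount n k = Nat.card {m : ℕ // 0 < m ∧ matulaSize m = n ∧ matulaLeaves m = k} :=
  card_quotient_eq_card_matula n (· = k)

theorem aPlusN_eq_card (n : ℕ) :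
    aPlusN n = Nat.card {m : ℕ // 0 < m ∧ matulaSize m = n ∧ n < 2 * matulaLeaves m} :=
  card_quotient_eq_card_matula n (n < 2 * ·)

end Counting

section TreeWeight

theorem sum_pow_succ_div_eq_sum_Icc (t : ℝ) (I : ℕ) :
    ∑ i ∈ Finset.range I, t ^ (i + 1) / ((i : ℝ) + 1) = ∑ i ∈ Finset.Icc 1 I, t ^ i / i := by
  induction I with
  | zero => simp
  | succ I ih =>
    rw [Finset.sum_range_succ, ih, Finset.sum_Icc_succ_top (by omega), Nat.cast_succ]

theorem neg_log_one_sub_le {t : ℝ} (h0 : 0 ≤ t) (h1 : t < 1) (I : ℕ) :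
    -Real.log (1 - t) ≤ ∑ i ∈ Finset.Icc 1 I, t ^ i / i + t ^ (I + 1) / (1 - t) := by
  have h := Real.abs_log_sub_add_sum_range_le (x := t) (by rwa [abs_of_nonneg h0]) I
  rw [abs_of_nonneg h0, sum_pow_succ_div_eq_sum_Icc] at h
  linarith [(abs_le.mp h).1]

theorem le_neg_log_one_sub {t : ℝ} (h0 : 0 ≤ t) (h1 : t < 1) (I : ℕ) :
    ∑ i ∈ Finset.Icc 1 I, t ^ i / i ≤ -Real.log (1 - t) := by
  rw [← sum_pow_succ_div_eq_sum_Icc]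
  exact sum_le_hasSum _ (fun i _ => by positivity)
    (Real.hasSum_pow_div_log_of_abs_lt_one (by rwa [abs_of_nonneg h0]))

variable {ι : Type*} {t : ι → ℝ} {c : ℝ}

theorem prod_inv_one_sub_eq_exp (hc : ∀ m, t m < 1) (A : Finset ι) :
    ∏ m ∈ A, (1 - t m)⁻¹ = Real.exp (∑ m ∈ A, -Real.log (1 - t m)) := by
  rw [Real.exp_sum]
  refine Finset.prod_congr rfl fun m _ => ?_
  rw [Real.exp_neg, Real.exp_log (sub_pos.mpr (hc m))]

theorem sum_sum_pow_div_comm (t : ι → ℝ) (A : Finset ι) (I : ℕ) :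
    ∑ m ∈ A, ∑ i ∈ Finset.Icc 1 I, t m ^ i / i =
      ∑ i ∈ Finset.Icc 1 I, (∑ m ∈ A, t m ^ i) / (i : ℝ) := by
  rw [Finset.sum_comm]
  exact Finset.sum_congr rfl fun i _ => (Finset.sum_div _ _ _).symm

theorem prod_inv_one_sub_le_exp (h0 : ∀ m, 0 ≤ t m) (hc : ∀ m, t m ≤ c) (hc1 : c < 1)
    (A : Finset ι) (I : ℕ) :
    ∏ m ∈ A, (1 - t m)⁻¹ ≤ Real.exp (∑ i ∈ Finset.Icc 1 I, (∑ m ∈ A, t m ^ i) / (i : ℝ) +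
      (∑ m ∈ A, t m ^ (I + 1)) / (1 - c)) := by
  rw [prod_inv_one_sub_eq_exp fun m => (hc m).trans_lt hc1, Real.exp_le_exp,
    ← sum_sum_pow_div_comm, Finset.sum_div, ← Finset.sum_add_distrib]
  refine Finset.sum_le_sum fun m _ => (neg_log_one_sub_le (h0 m) ((hc m).trans_lt hc1) I).trans ?_
  gcongr
  · exact pow_nonneg (h0 m) _
  · exact hc m

theorem exp_le_prod_inv_one_sub (h0 : ∀ m, 0 ≤ t m) (hc : ∀ m, t m < 1) (A : Finset ι) (I : ℕ) :
    Real.exp (∑ i ∈ Finset.Icc 1 I, (∑ m ∈ A, t m ^ i) / (i : ℝ)) ≤ ∏ m ∈ A, (1 - t m)⁻¹ := by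
  rw [prod_inv_one_sub_eq_exp hc, Real.exp_le_exp, ← sum_sum_pow_div_comm]
  exact Finset.sum_le_sum fun m _ => le_neg_log_one_sub (h0 m) (hc m) I

/-- The monomial `x ^ (number of vertices) * z ^ (number of leaves)` of the rooted tree with Matula
number `m`; it vanishes at `m = 0`, which is not a Matula number. -/
noncomputable def treeWeight (x z : ℝ) (m : ℕ) : ℝ :=
  if m = 0 then 0 else x ^ matulaSize m * z ^ matulaLeaves m

/-- The product of the `treeWeight`s of the branches at the root of the tree with Matula number
`n`. It is completely multiplicative in `n`, so that its sum over `n` is an Euler product. -/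
noncomputable def forestWeight (x z : ℝ) : ℕ →* ℝ where
  toFun n := if n = 0 then 0 else
    x ^ branchSum (fun _ => 1) n * z ^ branchSum (fun m => if m = 1 then 1 else 0) n
  map_one' := by simp [branchSum_one]
  map_mul' a b := by
    rcases eq_or_ne a 0 with rfl | ha
    · simp
    rcases eq_or_ne b 0 with rfl | hb
    · simp
    simp only [mul_ne_zero ha hb, ha, hb, if_false, branchSum_mul _ ha hb, pow_add]
    ring

/-- The range of parameters used for the generating function of rooted trees: the single vertex
has the largest weight `x * z`, and this is less than `1`. -/
structure Admissible (x z : ℝ) : Prop where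
  pos : 0 < x
  le_one : x ≤ 1
  one_le : 1 ≤ z
  mul_lt_one : x * z < 1

variable {x z : ℝ}

theorem Admissible.pow (h : Admissible x z) {j : ℕ} (hj : j ≠ 0) :
    Admissible (x ^ j) (z ^ j) where
  pos := pow_pos h.pos j
  le_one := pow_le_one₀ h.pos.le h.le_one
  one_le := one_le_pow₀ h.one_le
  mul_lt_one := by
    rw [← mul_pow]
    exact pow_lt_one₀ (mul_nonneg h.pos.le (zero_le_one.trans h.one_le)) h.mul_lt_one hj

theorem Admissible.mul_sub_one_nonneg (h : Admissible x z) : 0 ≤ x * (z - 1) :=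
  mul_nonneg h.pos.le (sub_nonneg.mpr h.one_le)

theorem treeWeight_pow {j : ℕ} (hj : j ≠ 0) (m : ℕ) :
    treeWeight (x ^ j) (z ^ j) m = treeWeight x z m ^ j := by
  unfold treeWeight
  split_ifs
  · rw [zero_pow hj]
  · rw [mul_pow, pow_right_comm x, pow_right_comm z]

theorem treeWeight_nonneg (hx : 0 ≤ x) (hz : 0 ≤ z) (m : ℕ) : 0 ≤ treeWeight x z m := by
  unfold treeWeight
  split_ifs <;> positivity

theorem Admissible.treeWeight_nonneg (h : Admissible x z) (m : ℕ) : 0 ≤ treeWeight x z m :=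
  _root_.treeWeight_nonneg h.pos.le (zero_le_one.trans h.one_le) m

theorem Admissible.forestWeight_nonneg (h : Admissible x z) (n : ℕ) : 0 ≤ forestWeight x z n := by
  have hx := h.pos
  have hz := one_pos.trans_le h.one_le
  simp only [forestWeight, MonoidHom.coe_mk, OneHom.coe_mk]
  split_ifs <;> positivity

theorem Admissible.treeWeight_le (h : Admissible x z) (m : ℕ) : treeWeight x z m ≤ x * z := by
  have hx := h.pos
  have hz := one_pos.trans_le h.one_le
  rcases Nat.eq_zero_or_pos m with rfl | hm
  · simpa [treeWeight] using (mul_pos hx hz).le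
  obtain ⟨a, ha⟩ := Nat.exists_eq_add_of_le' (matulaLeaves_pos hm)
  obtain ⟨b, hb⟩ := Nat.exists_eq_add_of_le (matulaLeaves_le_matulaSize m)
  calc treeWeight x z m = x ^ b * ((x * z) ^ a * (x * z)) := by
        rw [treeWeight, if_neg hm.ne', hb, ha, mul_pow]
        ring
    _ ≤ 1 * (1 * (x * z)) := by
        gcongr
        · exact pow_le_one₀ hx.le h.le_one
        · exact pow_le_one₀ (by positivity) h.mul_lt_one.le
    _ = x * z := by ring

theorem Admissible.treeWeight_lt_one (h : Admissible x z) (m : ℕ) : treeWeight x z m < 1 :=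
  (h.treeWeight_le m).trans_lt h.mul_lt_one

theorem Admissible.treeWeight_pow_le (h : Admissible x z) (m : ℕ) {i j : ℕ} (hij : i ≤ j) :
    treeWeight x z m ^ j ≤ treeWeight x z m ^ i :=
  pow_le_pow_of_le_one (h.treeWeight_nonneg m) (h.treeWeight_lt_one m).le hij

theorem Admissible.summable_treeWeight_pow (h : Admissible x z) (hs : Summable (treeWeight x z))
    {i : ℕ} (hi : 1 ≤ i) : Summable fun m => treeWeight x z m ^ i :=
  hs.of_nonneg_of_le (fun m => pow_nonneg (h.treeWeight_nonneg m) i) fun m => by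
    simpa using h.treeWeight_pow_le m hi

theorem forestWeight_nthPrime {m : ℕ} (hm : 0 < m) :
    forestWeight x z (nthPrime m) = treeWeight x z m := by
  simp only [forestWeight, MonoidHom.coe_mk, OneHom.coe_mk, treeWeight, branchSum_nthPrime _ hm,
    (prime_nthPrime m).ne_zero, hm.ne', if_false, matulaSize, matulaLeaves]

theorem treeWeight_eq (x z : ℝ) (n : ℕ) :
    treeWeight x z n = x * forestWeight x z n + if n = 1 then x * (z - 1) else 0 := by
  rcases eq_or_ne n 0 with rfl | h0
  · simp [treeWeight, forestWeight]
  simp only [treeWeight, forestWeight, MonoidHom.coe_mk, OneHom.coe_mk, if_neg h0, matulaSize,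
    matulaLeaves, fringeSum_eq]
  split_ifs with h1
  · simp only [h1, branchSum_one]
    ring
  · rw [pow_add, pow_one, zero_add, add_zero, mul_assoc]

theorem Admissible.hasSum_forestWeight (h : Admissible x z) (A : Finset ℕ) :
    HasSum (fun n : Nat.factoredNumbers ((A.erase 0).image nthPrime) => forestWeight x z n)
      (∏ m ∈ A, (1 - treeWeight x z m)⁻¹) := by
  have hlt : ∀ {p : ℕ}, p.Prime → ‖forestWeight x z p‖ < 1 := fun {p} hp => by
    rw [Real.norm_of_nonneg (h.forestWeight_nonneg p), ← nthPrime_primeIndex hp,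
      forestWeight_nthPrime (primeIndex_pos p)]
    exact h.treeWeight_lt_one _
  have hpos : ∀ m ∈ A.erase 0, 0 < m := fun m hm => Nat.pos_of_ne_zero (Finset.ne_of_mem_erase hm)
  have heuler := (EulerProduct.summable_and_hasSum_factoredNumbers_prod_filter_prime_geometric hlt
    ((A.erase 0).image nthPrime)).2
  rwa [Finset.filter_true_of_mem (Finset.forall_mem_image.mpr fun m _ => prime_nthPrime m),
    Finset.prod_image fun a ha b hb => (nthPrime_inj (hpos a ha) (hpos b hb)).mp,
    Finset.prod_congr rfl fun m hm => by rw [forestWeight_nthPrime (hpos m hm)],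
    Finset.prod_erase A (by simp [treeWeight])] at heuler

theorem Admissible.prod_le_tsum_forestWeight (h : Admissible x z)
    (hs : Summable (forestWeight x z)) (A : Finset ℕ) :
    ∏ m ∈ A, (1 - treeWeight x z m)⁻¹ ≤ ∑' n, forestWeight x z n := by
  rw [← (h.hasSum_forestWeight A).tsum_eq]
  exact Summable.tsum_subtype_le _ _ h.forestWeight_nonneg hs

theorem Admissible.sum_forestWeight_le_prod (h : Admissible x z) (N : ℕ) :
    ∑ n ∈ Finset.range (N + 1), forestWeight x z n ≤
      ∏ m ∈ Finset.range N, (1 - treeWeight x z m)⁻¹ := by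
  set S := Nat.factoredNumbers (((Finset.range N).erase 0).image nthPrime)
  have hprod : HasSum (S.indicator (forestWeight x z)) _ :=
    hasSum_subtype_iff_indicator.mp (h.hasSum_forestWeight (Finset.range N))
  refine le_trans (Finset.sum_le_sum fun n hn => ?_)
    (sum_le_hasSum _ (fun n _ => Set.indicator_nonneg (fun n _ => h.forestWeight_nonneg n) n) hprod)
  rcases eq_or_ne n 0 with rfl | h0
  · rw [show forestWeight x z 0 = 0 by simp [forestWeight]]
    exact Set.indicator_nonneg (fun n _ => h.forestWeight_nonneg n) 0
  rw [Set.indicator_of_mem]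
  refine Nat.mem_factoredNumbers.mpr ⟨h0, fun p hp => Finset.mem_image.mpr ⟨primeIndex p, ?_, ?_⟩⟩
  · have hpN := Nat.le_of_mem_primeFactorsList hp
    have := primeIndex_lt (Nat.prime_of_mem_primeFactorsList hp)
    simp only [Finset.mem_erase, Finset.mem_range] at hn ⊢
    exact ⟨(primeIndex_pos p).ne', by omega⟩
  · exact nthPrime_primeIndex (Nat.prime_of_mem_primeFactorsList hp)

end TreeWeight

section FunctionalEquation

theorem multiples_induction {P : ℕ → Prop} {J : ℕ}
    (step : ∀ j ∈ Finset.Icc 1 J, (∀ i ∈ Finset.Icc 2 (J / j), P (i * j)) → P j) :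
    ∀ j ∈ Finset.Icc 1 J, P j := by
  intro j
  induction hd : J - j using Nat.strong_induction_on generalizing j with
  | _ d ih =>
    intro hj
    refine step j hj fun i hi => ?_
    rw [Finset.mem_Icc] at hi hj
    have hle : i * j ≤ J := (Nat.mul_le_mul_right j hi.2).trans (Nat.div_mul_le_self J j)
    have hlt : j < i * j := by nlinarith
    exact ih (J - i * j) (by omega) _ rfl (Finset.mem_Icc.mpr ⟨by omega, hle⟩)

/-- The exponent of Pólya's functional equation
`T(x, z) = x * (z - 1) + x * exp (∑ T(x ^ i, z ^ i) / i)` at the point `(x ^ j, z ^ j)`, where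
`L i` stands for `T(x ^ i, z ^ i)` and the terms `L i` with `J < i` are dropped. -/
def polyaExponent {K : Type*} [Field K] (L : ℕ → K) (J j : ℕ) : K :=
  ∑ i ∈ Finset.Icc 1 (J / j), L (i * j) / i

variable {x z : ℝ}

theorem Admissible.sum_treeWeight_le (h : Admissible x z) {y E : ℝ} (hy : 0 ≤ y)
    (hE : ∀ A : Finset ℕ, ∑ m ∈ A, treeWeight x z m ≤ y → ∏ m ∈ A, (1 - treeWeight x z m)⁻¹ ≤ E)
    (hyE : x * (z - 1) + x * E ≤ y) (A : Finset ℕ) : ∑ m ∈ A, treeWeight x z m ≤ y := by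
  have hrange : ∀ N, ∑ m ∈ Finset.range N, treeWeight x z m ≤ y := by
    intro N
    induction N with
    | zero => simpa using hy
    | succ N ih =>
      have hforest := mul_le_mul_of_nonneg_left
        ((h.sum_forestWeight_le_prod N).trans (hE _ ih)) h.pos.le
      simp only [treeWeight_eq, Finset.sum_add_distrib, ← Finset.mul_sum, Finset.sum_ite_eq']
      split_ifs <;> linarith [h.mul_sub_one_nonneg]
  obtain ⟨N, hN⟩ := A.exists_nat_subset_range
  exact (Finset.sum_le_sum_of_subset_of_nonneg hN fun _ _ _ => h.treeWeight_nonneg _).trans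
    (hrange N)

theorem Admissible.sum_treeWeight_le_of_tail (h : Admissible x z) {Y : ℝ}
    (hY : x * (z - 1) + x * Real.exp (Y / (1 - x * z)) ≤ Y) (A : Finset ℕ) :
    ∑ m ∈ A, treeWeight x z m ≤ Y := by
  have hY0 : 0 ≤ Y :=
    (add_nonneg h.mul_sub_one_nonneg (mul_nonneg h.pos.le (Real.exp_pos _).le)).trans hY
  refine h.sum_treeWeight_le hY0 (fun A hA => ?_) hY A
  refine (prod_inv_one_sub_le_exp h.treeWeight_nonneg h.treeWeight_le h.mul_lt_one A 0).trans ?_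
  have := sub_pos.mpr h.mul_lt_one
  simp only [Finset.Icc_eq_empty (by omega : ¬1 ≤ 0), Finset.sum_empty, zero_add, pow_one]
  gcongr

theorem Admissible.sum_treeWeight_le_of_powers (h : Admissible x z) {B : ℕ → ℝ} {I : ℕ} {Y : ℝ}
    (hB : ∀ i ∈ Finset.Icc 2 I, ∀ A : Finset ℕ, ∑ m ∈ A, treeWeight x z m ^ i ≤ B i)
    (hY : ∀ A : Finset ℕ, ∑ m ∈ A, treeWeight x z m ^ (I + 1) ≤ Y)
    (hB1 : x * (z - 1) +
      x * Real.exp (∑ i ∈ Finset.Icc 1 I, B i / i + Y / (1 - x * z)) ≤ B 1) (A : Finset ℕ) :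
    ∑ m ∈ A, treeWeight x z m ≤ B 1 := by
  have hB0 : 0 ≤ B 1 :=
    (add_nonneg h.mul_sub_one_nonneg (mul_nonneg h.pos.le (Real.exp_pos _).le)).trans hB1
  refine h.sum_treeWeight_le hB0 (fun A hA => ?_) hB1 A
  refine (prod_inv_one_sub_le_exp h.treeWeight_nonneg h.treeWeight_le h.mul_lt_one A I).trans ?_
  have := sub_pos.mpr h.mul_lt_one
  gcongr with i hi
  · rcases (Finset.mem_Icc.mp hi).1.eq_or_lt with rfl | hi1
    · simpa using hA
    · exact hB i (Finset.mem_Icc.mpr ⟨hi1, (Finset.mem_Icc.mp hi).2⟩) A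
  · exact hY A

theorem Admissible.div_one_sub_pow_le (h : Admissible x z) {Y : ℝ} (hY : 0 ≤ Y) {j : ℕ}
    (hj : j ≠ 0) : Y / (1 - x ^ j * z ^ j) ≤ Y / (1 - x * z) := by
  have hxz : x ^ j * z ^ j ≤ x * z := by
    rw [← mul_pow]
    exact pow_le_of_le_one (mul_nonneg h.pos.le (zero_le_one.trans h.one_le)) h.mul_lt_one.le hj
  have := sub_pos.mpr h.mul_lt_one
  gcongr

theorem Admissible.sum_treeWeight_pow_le_of_supersolution (h : Admissible x z) {J : ℕ} {U : ℕ → ℝ}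
    {Y : ℝ} (hY : ∀ A : Finset ℕ, ∑ m ∈ A, treeWeight x z m ^ (J + 1) ≤ Y)
    (hU : ∀ j ∈ Finset.Icc 1 J,
      x ^ j * (z ^ j - 1) + x ^ j * Real.exp (polyaExponent U J j + Y / (1 - x * z)) ≤ U j) :
    ∀ j ∈ Finset.Icc 1 J, ∀ A : Finset ℕ, ∑ m ∈ A, treeWeight x z m ^ j ≤ U j := by
  refine multiples_induction fun j hj ih => ?_
  have hj0 : 0 < j := (Finset.mem_Icc.mp hj).1
  have hpow : ∀ i m, treeWeight (x ^ j) (z ^ j) m ^ i = treeWeight x z m ^ (i * j) := fun i m => by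
    rw [treeWeight_pow hj0.ne', ← pow_mul, mul_comm]
  have hJj : J + 1 ≤ (J / j + 1) * j := (Nat.div_lt_iff_lt_mul hj0).mp (Nat.lt_succ_self _)
  have hxj := (h.pow hj0.ne').pos
  have hYj := h.div_one_sub_pow_le (by simpa using hY ∅) hj0.ne'
  have hbound := (h.pow hj0.ne').sum_treeWeight_le_of_powers (B := fun i => U (i * j)) (I := J / j)
    (Y := Y) (fun i hi A => by simpa only [hpow] using ih i hi A) (fun A => ?_) ?_
  · simpa only [one_mul, treeWeight_pow hj0.ne'] using hbound
  · simp only [hpow]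
    exact (Finset.sum_le_sum fun m _ => h.treeWeight_pow_le m hJj).trans (hY A)
  · rw [one_mul]
    refine le_trans ?_ (hU j hj)
    rw [polyaExponent]
    gcongr 2
    gcongr

theorem Admissible.summable_treeWeight_of_supersolution (h : Admissible x z) {J : ℕ} (hJ : 1 ≤ J)
    {U : ℕ → ℝ} {Y τ : ℝ} (hτ : Y / (1 - x * z) ≤ τ)
    (hY : x ^ (J + 1) * (z ^ (J + 1) - 1) + x ^ (J + 1) * Real.exp τ ≤ Y)
    (hU : ∀ j ∈ Finset.Icc 1 J,
      x ^ j * (z ^ j - 1) + x ^ j * Real.exp (polyaExponent U J j + τ) ≤ U j) :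
    Summable (treeWeight x z) := by
  have hx := h.pos
  have hJ1 := h.pow J.succ_ne_zero
  have hY0 : 0 ≤ Y :=
    (add_nonneg hJ1.mul_sub_one_nonneg (mul_nonneg hJ1.pos.le (Real.exp_pos _).le)).trans hY
  have htail : ∀ A : Finset ℕ, ∑ m ∈ A, treeWeight x z m ^ (J + 1) ≤ Y := by
    simp only [← treeWeight_pow J.succ_ne_zero]
    refine hJ1.sum_treeWeight_le_of_tail (le_trans ?_ hY)
    gcongr
    exact (h.div_one_sub_pow_le hY0 J.succ_ne_zero).trans hτ
  refine summable_of_sum_le (c := U 1) h.treeWeight_nonneg fun A => ?_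
  simpa only [pow_one] using h.sum_treeWeight_pow_le_of_supersolution htail
    (fun j hj => le_trans (by gcongr) (hU j hj)) 1 (Finset.mem_Icc.mpr ⟨le_rfl, hJ⟩) A

theorem Admissible.polya_lower_bound (h : Admissible x z) (hs : Summable (treeWeight x z)) (I : ℕ) :
    x * (z - 1) + x * Real.exp (∑ i ∈ Finset.Icc 1 I, (∑' m, treeWeight x z m ^ i) / (i : ℝ)) ≤
      ∑' m, treeWeight x z m := by
  have hforest : Summable (forestWeight x z) := by
    refine (hs.mul_left x⁻¹).of_nonneg_of_le h.forestWeight_nonneg fun n => ?_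
    rw [le_inv_mul_iff₀ h.pos, treeWeight_eq]
    split_ifs <;> linarith [h.mul_sub_one_nonneg]
  have htree : HasSum (treeWeight x z) (x * ∑' n, forestWeight x z n + x * (z - 1)) := by
    rw [funext (treeWeight_eq x z)]
    exact (hforest.hasSum.mul_left x).add (hasSum_ite_eq 1 (x * (z - 1)))
  have hexp : Filter.Tendsto
      (fun A => Real.exp (∑ i ∈ Finset.Icc 1 I, (∑ m ∈ A, treeWeight x z m ^ i) / (i : ℝ)))
      Filter.atTop
      (nhds (Real.exp (∑ i ∈ Finset.Icc 1 I, (∑' m, treeWeight x z m ^ i) / (i : ℝ)))) :=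
    (Real.continuous_exp.tendsto _).comp (tendsto_finsetSum _ fun i hi =>
      Filter.Tendsto.div_const (h.summable_treeWeight_pow hs (Finset.mem_Icc.mp hi).1).hasSum _)
  have hle : Real.exp (∑ i ∈ Finset.Icc 1 I, (∑' m, treeWeight x z m ^ i) / (i : ℝ)) ≤
      ∑' n, forestWeight x z n :=
    le_of_tendsto hexp (.of_forall fun A =>
      (exp_le_prod_inv_one_sub h.treeWeight_nonneg h.treeWeight_lt_one A I).trans
        (h.prod_le_tsum_forestWeight hforest A))
  rw [htree.tsum_eq, add_comm]
  gcongr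
  exact h.pos.le

theorem le_of_exp_subsolution {a b L T : ℝ} (hb : 0 < b) (hT : a + b * Real.exp T ≤ T)
    (hL : L ≤ a + b * Real.exp L) (hbL : b * Real.exp L ≤ 1) : L ≤ T := by
  by_contra! hlt
  have hexp : T - L + 1 < Real.exp (T - L) := Real.add_one_lt_exp (by linarith)
  have hTL : Real.exp T = Real.exp L * Real.exp (T - L) := by rw [← Real.exp_add]; congr 1; ring
  have hpos : 0 < b * Real.exp L := mul_pos hb (Real.exp_pos L)
  rw [hTL] at hT
  nlinarith

theorem mul_exp_one_add_le_one {a b T : ℝ} (hT : a + b * Real.exp T ≤ T) :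
    b * Real.exp (1 + a) ≤ 1 := by
  have hexp := Real.add_one_le_exp (T - a - 1)
  have hpos := Real.exp_pos (T - a - 1)
  have hTa : Real.exp T = Real.exp (1 + a) * Real.exp (T - a - 1) := by
    rw [← Real.exp_add]; congr 1; ring
  rw [hTa] at hT
  nlinarith

theorem polyaExponent_eq {K : Type*} [Field K] (L : ℕ → K) {J j : ℕ} (hj : j ∈ Finset.Icc 1 J) :
    polyaExponent L J j = (∑ i ∈ Finset.Icc 2 (J / j), L (i * j) / i) + L j := by
  rw [Finset.mem_Icc] at hj
  rw [polyaExponent, ← Finset.insert_Icc_add_one_left_eq_Icc (Nat.div_pos hj.2 hj.1),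
    Finset.sum_insert (by simp), one_mul, Nat.cast_one, div_one, add_comm]
  rfl

theorem Admissible.le_tsum_treeWeight_pow (h : Admissible x z) (hs : Summable (treeWeight x z))
    {J j : ℕ} (hj : j ∈ Finset.Icc 1 J) {L : ℕ → ℝ}
    (hL : ∀ i ∈ Finset.Icc 2 (J / j), L (i * j) ≤ ∑' m, treeWeight x z m ^ (i * j)) :
    x ^ j * (z ^ j - 1) + x ^ j * Real.exp (∑ i ∈ Finset.Icc 2 (J / j), L (i * j) / i) *
      Real.exp (∑' m, treeWeight x z m ^ j) ≤ ∑' m, treeWeight x z m ^ j := by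
  have hj0 : 1 ≤ j := (Finset.mem_Icc.mp hj).1
  have hpow : ∀ m, treeWeight (x ^ j) (z ^ j) m = treeWeight x z m ^ j :=
    treeWeight_pow (Nat.pos_iff_ne_zero.mp hj0)
  have hbound := (h.pow (Nat.pos_iff_ne_zero.mp hj0)).polya_lower_bound
    (by simpa only [funext hpow] using h.summable_treeWeight_pow hs hj0) (J / j)
  simp only [hpow, ← pow_mul, mul_comm j] at hbound
  have hx := h.pos
  refine le_trans ?_ hbound
  rw [mul_assoc, ← Real.exp_add]
  have hsplit := polyaExponent_eq (fun i => ∑' m, treeWeight x z m ^ i) hj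
  rw [polyaExponent] at hsplit
  rw [hsplit]
  gcongr with i hi
  exact hL i hi

theorem Admissible.not_summable_treeWeight_of_subsolution (h : Admissible x z) {J : ℕ} (hJ : 1 ≤ J)
    {L : ℕ → ℝ}
    (hL : ∀ j ∈ Finset.Icc 2 J,
      L j ≤ x ^ j * (z ^ j - 1) + x ^ j * Real.exp (polyaExponent L J j) ∧
        x ^ j * Real.exp (polyaExponent L J j) ≤ 1)
    (hL1 : L 1 ≤ 1 + x * (z - 1)) (hexp : 1 < x * Real.exp (polyaExponent L J 1)) :
    ¬Summable (treeWeight x z) := by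
  intro hs
  have hx := h.pos
  have hle : ∀ j ∈ Finset.Icc 1 J, j ≠ 1 → L j ≤ ∑' m, treeWeight x z m ^ j := by
    refine multiples_induction fun j hj ih hj1 => ?_
    have hj2 : 2 ≤ j := by have := (Finset.mem_Icc.mp hj).1; omega
    have hsub := hL j (Finset.mem_Icc.mpr ⟨hj2, (Finset.mem_Icc.mp hj).2⟩)
    rw [polyaExponent_eq L hj, Real.exp_add, ← mul_assoc] at hsub
    have hT := h.le_tsum_treeWeight_pow hs hj (L := L) fun i hi =>
      ih i hi (by have := (Finset.mem_Icc.mp hi).1; nlinarith)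
    exact le_of_exp_subsolution (by positivity) hT hsub.1 hsub.2
  have h1 : 1 ∈ Finset.Icc 1 J := Finset.mem_Icc.mpr ⟨le_rfl, hJ⟩
  have hT := h.le_tsum_treeWeight_pow hs h1 (L := L) fun i hi => by
    have := Finset.mem_Icc.mp hi
    rw [mul_one]
    exact hle i (Finset.mem_Icc.mpr ⟨by omega, by simpa using this.2⟩) (by omega)
  refine absurd (mul_exp_one_add_le_one hT) (not_le_of_gt (hexp.trans_le ?_))
  rw [polyaExponent_eq L h1, Real.exp_add, ← mul_assoc, pow_one, pow_one]
  gcongr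

end FunctionalEquation

section Certificates

/-- A rational lower bound for `exp q` when `0 ≤ q`: a Taylor polynomial. -/
def expLower (q : ℚ) : ℚ := ∑ k ∈ Finset.range 20, q ^ k / k.factorial

/-- A rational upper bound for `exp q` when `0 ≤ q ≤ 2`: the square of the Taylor polynomial at
`q / 2` together with its remainder bound on `[0, 1]`. -/
def expUpper (q : ℚ) : ℚ :=
  (∑ k ∈ Finset.range 16, (q / 2) ^ k / k.factorial +
    (q / 2) ^ 16 * (16 + 1) / (Nat.factorial 16 * 16)) ^ 2

theorem expLower_le_exp {q : ℚ} (hq : 0 ≤ q) : (expLower q : ℝ) ≤ Real.exp q := by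
  rw [expLower]
  push_cast
  exact Real.sum_le_exp_of_nonneg (Rat.cast_nonneg.mpr hq) 20

theorem exp_le_expUpper {q : ℚ} (hq : q ∈ Set.Icc 0 2) : Real.exp q ≤ expUpper q := by
  have h0 : (0 : ℝ) ≤ q := by exact_mod_cast hq.1
  have h2 : (q : ℝ) ≤ 2 := by exact_mod_cast hq.2
  have hhalf := Real.exp_bound' (x := (q : ℝ) / 2) (n := 16) (by linarith) (by linarith)
    (by norm_num)
  have hsq : Real.exp q = Real.exp ((q : ℝ) / 2) ^ 2 := by
    rw [sq, ← Real.exp_add, add_halves]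
  rw [hsq, expUpper, Rat.cast_pow]
  refine pow_le_pow_left₀ (Real.exp_pos _).le (hhalf.trans_eq ?_) 2
  push_cast
  rfl

theorem cast_polyaExponent (L : ℕ → ℚ) (J j : ℕ) :
    ((polyaExponent L J j : ℚ) : ℝ) = polyaExponent (fun i => (L i : ℝ)) J j := by
  simp only [polyaExponent, Rat.cast_sum, Rat.cast_div, Rat.cast_natCast]

variable {x z : ℚ} {J : ℕ}

theorem not_summable_treeWeight_of_rat (h : Admissible x z) (hJ : 1 ≤ J) {L : ℕ → ℚ}
    (hL : ∀ j ∈ Finset.Icc 2 J, polyaExponent L J j ∈ Set.Icc 0 2 ∧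
      L j ≤ x ^ j * (z ^ j - 1) + x ^ j * expLower (polyaExponent L J j) ∧
      x ^ j * expUpper (polyaExponent L J j) ≤ 1)
    (hL1 : L 1 ≤ 1 + x * (z - 1) ∧ 0 ≤ polyaExponent L J 1 ∧
      1 < x * expLower (polyaExponent L J 1)) :
    ¬Summable (treeWeight x z) := by
  have hx := h.pos
  refine h.not_summable_treeWeight_of_subsolution hJ (L := fun i => (L i : ℝ)) (fun j hj => ?_)
    (by exact_mod_cast hL1.1) ?_
  · obtain ⟨hrange, hlower, hupper⟩ := hL j hj
    rw [← cast_polyaExponent]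
    have hlower' : (L j : ℝ) ≤
        x ^ j * (z ^ j - 1) + x ^ j * expLower (polyaExponent L J j) := by exact_mod_cast hlower
    have hupper' : (x : ℝ) ^ j * expUpper (polyaExponent L J j) ≤ 1 := by exact_mod_cast hupper
    exact ⟨hlower'.trans (by gcongr; exact expLower_le_exp hrange.1),
      le_trans (by gcongr; exact exp_le_expUpper hrange) hupper'⟩
  · obtain ⟨-, hpos, hexp⟩ := hL1
    rw [← cast_polyaExponent]
    have hexp' : (1 : ℝ) < x * expLower (polyaExponent L J 1) := by exact_mod_cast hexp
    exact hexp'.trans_le (by gcongr; exact expLower_le_exp hpos)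

theorem summable_treeWeight_of_rat (h : Admissible x z) (hJ : 1 ≤ J) {U : ℕ → ℚ} {Y τ : ℚ}
    (hτ : Y / (1 - x * z) ≤ τ ∧ τ ∈ Set.Icc 0 2 ∧
      x ^ (J + 1) * (z ^ (J + 1) - 1) + x ^ (J + 1) * expUpper τ ≤ Y)
    (hU : ∀ j ∈ Finset.Icc 1 J, polyaExponent U J j + τ ∈ Set.Icc 0 2 ∧
      x ^ j * (z ^ j - 1) + x ^ j * expUpper (polyaExponent U J j + τ) ≤ U j) :
    Summable (treeWeight x z) := by
  have hx := h.pos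
  obtain ⟨hYτ, hrange, hY⟩ := hτ
  refine h.summable_treeWeight_of_supersolution hJ (U := fun i => (U i : ℝ)) (Y := Y) (τ := τ)
    (by exact_mod_cast hYτ) ?_ fun j hj => ?_
  · have hY' : (x : ℝ) ^ (J + 1) * (z ^ (J + 1) - 1) + x ^ (J + 1) * expUpper τ ≤ Y := by
      exact_mod_cast hY
    exact le_trans (by gcongr; exact exp_le_expUpper hrange) hY'
  · have hU' : (x : ℝ) ^ j * (z ^ j - 1) + x ^ j * expUpper (polyaExponent U J j + τ) ≤ U j := by
      exact_mod_cast (hU j hj).2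
    have hexp := exp_le_expUpper (hU j hj).1
    rw [Rat.cast_add, cast_polyaExponent] at hexp
    exact le_trans (by gcongr) hU'

/-- The sequence whose `j`-th term is the `j`-th entry of the list in units of `10 ^ (-12)`. -/
def decimalTable (l : List ℕ) (j : ℕ) : ℚ := l.getD j 0 / 10 ^ 12

-- The points `x = w / u`, `z = u ^ 2` surround the optimum `w = x₀ = 0.342538482…`,
-- `u = 1.21857…`. The entries `j ≥ 2` of the tables are rounded values of `T(x ^ j, z ^ j)`.
theorem not_summable_treeWeight_left :
    ¬Summable (treeWeight (0.34253848203 / 1.21853) (1.21853 ^ 2)) := by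
  have hrat := not_summable_treeWeight_of_rat (x := 0.34253848203 / 1.21853)
    (z := 1.21853 ^ 2) (J := 25)
    (L := decimalTable [0, 1136285456892, 192681650996, 74501948257, 30548383532, 12691144377,
      5290406719, 2207392394, 921258923, 384516617, 160493438, 66988755, 27960647, 11670587,
      4871225, 2033216, 848650, 354220, 147848, 61710, 25756, 10750, 4486, 1872, 780, 325])
    (by constructor <;> norm_num) (by norm_num) (by decide +kernel) (by decide +kernel)
  simpa only [Rat.cast_div, Rat.cast_pow, Rat.cast_ofScientific] using hrat

theorem summable_treeWeight_middle :
    Summable (treeWeight (0.34253848209 / 1.21857) (1.21857 ^ 2)) := by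
  have hrat := summable_treeWeight_of_rat (x := 0.34253848209 / 1.21857)
    (z := 1.21857 ^ 2) (J := 25) (Y := 136319053 / 10 ^ 18) (τ := 233986816 / 10 ^ 18)
    (U := decimalTable [0, 1136308385926, 192693242146, 74509119479, 30552369749, 12693223892,
      5291448291, 2207899606, 921500880, 384630236, 160546135, 67012952, 27971667, 11675572,
      4873468, 2034222, 849100, 354422, 147940, 61753, 25777, 10761, 4493, 1877, 785, 329])
    (by constructor <;> norm_num) (by norm_num) (by decide +kernel) (by decide +kernel)
  simpa only [Rat.cast_div, Rat.cast_pow, Rat.cast_ofScientific] using hrat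

theorem not_summable_treeWeight_right :
    ¬Summable (treeWeight (0.34253848199 / 1.21862) (1.21862 ^ 2)) := by
  have hrat := not_summable_treeWeight_of_rat (x := 0.34253848199 / 1.21862)
    (z := 1.21862 ^ 2) (J := 25)
    (L := decimalTable [0, 1136337046296, 192707731355, 74518084029, 30557352996, 12695823628,
      5292750471, 2208533745, 921803391, 384772291, 160612017, 67043201, 27985439, 11681798,
      4876265, 2035470, 849654, 354665, 148045, 61797, 25795, 10766, 4493, 1875, 782, 325])
    (by constructor <;> norm_num) (by norm_num) (by decide +kernel) (by decide +kernel)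
  simpa only [Rat.cast_div, Rat.cast_pow, Rat.cast_ofScientific] using hrat

theorem summable_treeWeight_far_right :
    Summable (treeWeight (0.34253848137 / 1.21867) (1.21867 ^ 2)) := by
  have hrat := summable_treeWeight_of_rat (x := 0.34253848137 / 1.21867)
    (z := 1.21867 ^ 2) (J := 25) (Y := 136610201 / 10 ^ 18) (τ := 234500348 / 10 ^ 18)
    (U := decimalTable [0, 1136365705513, 192722220589, 74527048988, 30562336682, 12698423702,
      5294052878, 2209168024, 922105987, 384914396, 160677929, 67073468, 27999225, 11688034,
      4879070, 2036727, 850216, 354917, 148158, 61849, 25820, 10780, 4501, 1881, 786, 330])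
    (by constructor <;> norm_num) (by norm_num) (by decide +kernel) (by decide +kernel)
  simpa only [Rat.cast_div, Rat.cast_pow, Rat.cast_ofScientific] using hrat

end Certificates

section Superadditive

variable {M : Type*} [AddCommMonoid M] {S : AddSubsemigroup M} {g : M → ℝ}

/-- `g` is superadditive on the additive subsemigroup `S`. -/
def SuperadditiveOn (S : AddSubsemigroup M) (g : M → ℝ) : Prop :=
  ∀ ⦃p⦄, p ∈ S → ∀ ⦃q⦄, q ∈ S → g p + g q ≤ g (p + q)

theorem nsmul_mem_addSubsemigroup {p : M} (hp : p ∈ S) {k : ℕ} (hk : 0 < k) : k • p ∈ S := by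
  induction k, hk using Nat.le_induction with
  | base => simpa using hp
  | succ k _ ih => simpa only [succ_nsmul] using S.add_mem ih hp

theorem SuperadditiveOn.sub_addMonoidHom (hg : SuperadditiveOn S g) (φ : M →+ ℝ) :
    SuperadditiveOn S fun p => g p - φ p := fun p hp q hq => by
  linarith [hg hp hq, φ.map_add p q]

theorem SuperadditiveOn.mul_le_nsmul (hg : SuperadditiveOn S g) {p : M} (hp : p ∈ S) {k : ℕ}
    (hk : 0 < k) : k * g p ≤ g (k • p) := by
  induction k, hk using Nat.le_induction with
  | base => simp
  | succ k hk ih =>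
    rw [succ_nsmul, Nat.cast_succ]
    linarith [hg (nsmul_mem_addSubsemigroup hp hk) hp]

theorem SuperadditiveOn.le_of_le_const_add (hg : SuperadditiveOn S g) {φ : M →+ ℝ} {C : ℝ}
    (h : ∀ p ∈ S, g p ≤ C + φ p) : ∀ p ∈ S, g p ≤ φ p := by
  intro p hp
  by_contra! hlt
  obtain ⟨k, hk⟩ := exists_nat_gt (C / (g p - φ p))
  rw [div_lt_iff₀ (sub_pos.mpr hlt)] at hk
  have hle := (hg.mul_le_nsmul hp k.succ_pos).trans
    (h _ (nsmul_mem_addSubsemigroup hp k.succ_pos))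
  rw [map_nsmul, nsmul_eq_mul, Nat.cast_succ] at hle
  linarith

theorem SuperadditiveOn.div_le_div (hg : SuperadditiveOn S g) {d : M →+ ℤ}
    (hzero : ∀ p ∈ S, d p = 0 → g p ≤ 0) {p q : M} (hp : p ∈ S) (hq : q ∈ S) (hdp : d p < 0)
    (hdq : 0 < d q) : g q / d q ≤ g p / d p := by
  obtain ⟨a, ha⟩ := Int.eq_ofNat_of_zero_le hdq.le
  obtain ⟨b, hb⟩ := Int.eq_ofNat_of_zero_le (neg_pos.mpr hdp).le
  have hap := nsmul_mem_addSubsemigroup hp (show 0 < a by omega)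
  have hbq := nsmul_mem_addSubsemigroup hq (show 0 < b by omega)
  have hd : d (a • p + b • q) = 0 := by
    simp only [map_add, map_nsmul, nsmul_eq_mul, ← ha, ← hb]
    ring
  have hle : a * g p + b * g q ≤ 0 := calc
    a * g p + b * g q ≤ g (a • p) + g (b • q) :=
      add_le_add (hg.mul_le_nsmul hp (by omega)) (hg.mul_le_nsmul hq (by omega))
    _ ≤ g (a • p + b • q) := hg hap hbq
    _ ≤ 0 := hzero _ (S.add_mem hap hbq) hd
  rw [show (a : ℝ) = d q by exact_mod_cast ha.symm,
    show (b : ℝ) = -d p by exact_mod_cast hb.symm] at hle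
  rw [← neg_div_neg_eq (g p), div_le_div_iff₀ (by exact_mod_cast hdq)
    (by exact_mod_cast neg_pos.mpr hdp)]
  linarith

theorem SuperadditiveOn.exists_slope (hg : SuperadditiveOn S g) {d : M →+ ℤ}
    (hneg : ∃ p ∈ S, d p < 0) (hpos : ∃ p ∈ S, 0 < d p) (hzero : ∀ p ∈ S, d p = 0 → g p ≤ 0) :
    ∃ υ : ℝ, ∀ p ∈ S, g p ≤ d p * υ := by
  obtain ⟨υ, hυ₁, hυ₂⟩ := exists_between_of_forall_le
    (s := (fun q => g q / d q) '' {q | q ∈ S ∧ 0 < d q})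
    (t := (fun p => g p / d p) '' {p | p ∈ S ∧ d p < 0})
    (Set.Nonempty.image _ hpos) (Set.Nonempty.image _ hneg)
    (Set.forall_mem_image.mpr fun q hq => Set.forall_mem_image.mpr fun p hp =>
      hg.div_le_div hzero hp.1 hq.1 hp.2 hq.2)
  refine ⟨υ, fun p hp => ?_⟩
  rcases lt_trichotomy (d p) 0 with hd | hd | hd
  · have hd' : (d p : ℝ) < 0 := by exact_mod_cast hd
    have := hυ₂ (Set.mem_image_of_mem _ ⟨hp, hd⟩)
    rwa [le_div_iff_of_neg hd', mul_comm] at this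
  · simpa [hd] using hzero p hp hd
  · have hd' : (0 : ℝ) < d p := by exact_mod_cast hd
    have := hυ₁ (Set.mem_image_of_mem _ ⟨hp, hd⟩)
    rwa [div_le_iff₀ hd', mul_comm] at this

end Superadditive

section Growth

theorem nsmul_two_zero (k : ℕ) : k • ((2, 0) : ℕ × ℤ) = (2 * k, 0) := by
  simp [mul_comm]

theorem summable_aCount_iff {x z : ℝ} (hx : 0 ≤ x) (hz : 0 ≤ z) :
    Summable (fun p : ℕ × ℕ => (aCount p.1 p.2 : ℝ) * x ^ p.1 * z ^ p.2) ↔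
      Summable (treeWeight x z) := by
  let shape : ℕ+ → ℕ × ℕ := fun m => (matulaSize m, matulaLeaves m)
  have hcard : ∀ p, Nat.card {m // shape m = p} = aCount p.1 p.2 := fun p =>
    (Nat.card_congr ⟨fun m => ⟨m.1, m.1.2, Prod.ext_iff.mp m.2⟩,
      fun m => ⟨⟨m.1, m.2.1⟩, Prod.ext_iff.mpr m.2.2⟩, fun _ => rfl, fun _ => rfl⟩).trans
      (aCount_eq_card p.1 p.2).symm
  have hfinite : ∀ p, Finite {m // shape m = p} := fun p =>
    ((finite_setOf_matulaSize_eq p.1).preimage PNat.coe_injective.injOn).subset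
      (fun m hm => ⟨m.2, (Prod.ext_iff.mp hm).1⟩)
  have hfiber : ∀ p, ∑' m : {m // shape m = p}, treeWeight x z m.1 =
      (aCount p.1 p.2 : ℝ) * x ^ p.1 * z ^ p.2 := by
    intro p
    have hconst : ∀ m : {m // shape m = p}, treeWeight x z m.1 = x ^ p.1 * z ^ p.2 := by
      rintro ⟨m, rfl⟩
      exact if_neg m.ne_zero
    rw [tsum_congr hconst, tsum_const, hcard, nsmul_eq_mul, mul_assoc]
  have hrange : ∀ m ∉ Set.range ((↑) : ℕ+ → ℕ), treeWeight x z m = 0 := fun m hm =>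
    if_pos (by_contra fun h0 => hm ⟨⟨m, Nat.pos_of_ne_zero h0⟩, rfl⟩)
  rw [← PNat.coe_injective.summable_iff hrange, ← (Equiv.sigmaFiberEquiv shape).summable_iff,
    summable_sigma_of_nonneg (f := (treeWeight x z ∘ (↑)) ∘ Equiv.sigmaFiberEquiv shape)
      fun _ => treeWeight_nonneg hx hz _]
  simp only [← hfiber]
  exact ⟨fun h => ⟨fun p => have := hfinite p; Summable.of_finite, h⟩, fun h => h.2⟩

/-- The Matula numbers of the rooted trees with `n - 1` vertices and `k` leaves, where
`d = 2 * k - n`. This shift makes both parameters additive when two trees are grafted at a new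
root. -/
noncomputable def excessClass (n : ℕ) (d : ℤ) : Finset ℕ :=
  (finite_setOf_matulaSize_eq (n - 1)).toFinset.filter fun m =>
    matulaSize m + 1 = n ∧ 2 * (matulaLeaves m : ℤ) - n = d

theorem mem_excessClass {n : ℕ} {d : ℤ} {m : ℕ} : m ∈ excessClass n d ↔
    0 < m ∧ matulaSize m + 1 = n ∧ 2 * (matulaLeaves m : ℤ) - n = d := by
  simp only [excessClass, Finset.mem_filter, Set.Finite.mem_toFinset, Set.mem_ofPred_eq]
  exact ⟨fun h => ⟨h.1.1, h.2⟩, fun h => ⟨⟨h.1, by omega⟩, h.2⟩⟩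

theorem aCount_eq_card_excessClass (n k : ℕ) :
    aCount n k = (excessClass (n + 1) (2 * k - (n + 1))).card := by
  rw [aCount_eq_card, ← Nat.card_eq_finsetCard]
  refine Nat.card_congr (Equiv.subtypeEquivRight fun m => ?_)
  rw [mem_excessClass]
  omega

theorem aPlusN_eq_sum (n : ℕ) :
    aPlusN n = ∑ j ∈ Finset.range n, (excessClass (n + 1) j).card := by
  rw [aPlusN_eq_card, ← Finset.card_biUnion, ← Nat.card_eq_finsetCard]
  · refine Nat.card_congr (Equiv.subtypeEquivRight fun m => ?_)
    have := matulaLeaves_le_matulaSize m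
    simp only [Finset.mem_biUnion, Finset.mem_range, mem_excessClass]
    exact ⟨fun h => ⟨2 * matulaLeaves m - (n + 1), by omega⟩, fun ⟨j, hj⟩ => by omega⟩
  · intro i _ j _ hij
    refine Finset.disjoint_left.mpr fun m hi hj => hij ?_
    rw [mem_excessClass] at hi hj
    omega

theorem nthPrime_mul_nthPrime_mem_excessClass {n n' : ℕ} {d d' : ℤ} {p q : ℕ}
    (hp : p ∈ excessClass n d) (hq : q ∈ excessClass n' d') :
    nthPrime p * nthPrime q ∈ excessClass (n + n') (d + d') := by
  obtain ⟨hp0, hpn, hpd⟩ := mem_excessClass.mp hp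
  obtain ⟨hq0, hqn, hqd⟩ := mem_excessClass.mp hq
  have hsize := matulaSize_mul (prime_nthPrime p).ne_zero (prime_nthPrime q).ne_zero
  have hleaves := matulaLeaves_mul (prime_nthPrime p).one_lt (prime_nthPrime q).one_lt
  rw [matulaSize_nthPrime hp0, matulaSize_nthPrime hq0] at hsize
  rw [matulaLeaves_nthPrime hp0, matulaLeaves_nthPrime hq0] at hleaves
  have hpos := Nat.mul_pos (prime_nthPrime p).pos (prime_nthPrime q).pos
  exact mem_excessClass.mpr ⟨hpos, by omega, by omega⟩

theorem nthPrime_mul_nthPrime_inj {a b p q : ℕ} (ha : 0 < a) (hb : 0 < b) (hp : 0 < p) (hq : 0 < q)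
    (h : nthPrime a * nthPrime b = nthPrime p * nthPrime q) :
    a = p ∧ b = q ∨ a = q ∧ b = p := by
  rcases (prime_nthPrime a).dvd_mul.mp ⟨nthPrime b, h.symm⟩ with hdvd | hdvd
  · have heq := (Nat.prime_dvd_prime_iff_eq (prime_nthPrime a) (prime_nthPrime p)).mp hdvd
    rw [heq] at h
    exact Or.inl ⟨(nthPrime_inj ha hp).mp heq,
      (nthPrime_inj hb hq).mp (Nat.eq_of_mul_eq_mul_left (prime_nthPrime p).pos h)⟩
  · have heq := (Nat.prime_dvd_prime_iff_eq (prime_nthPrime a) (prime_nthPrime q)).mp hdvd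
    rw [heq, mul_comm] at h
    exact Or.inr ⟨(nthPrime_inj ha hq).mp heq,
      (nthPrime_inj hb hp).mp (Nat.eq_of_mul_eq_mul_right (prime_nthPrime q).pos h)⟩

theorem card_excessClass_mul_le (n n' : ℕ) (d d' : ℤ) :
    (excessClass n d).card * (excessClass n' d').card ≤
      2 * (excessClass (n + n') (d + d')).card := by
  rw [← Finset.card_product]
  refine Finset.card_le_mul_card_image_of_maps_to (f := fun p => nthPrime p.1 * nthPrime p.2)
    (fun p hp => ?_) 2 fun a _ => ?_
  · rw [Finset.mem_product] at hp
    exact nthPrime_mul_nthPrime_mem_excessClass hp.1 hp.2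
  · rcases Finset.eq_empty_or_nonempty
      {p ∈ excessClass n d ×ˢ excessClass n' d' | nthPrime p.1 * nthPrime p.2 = a}
      with hempty | ⟨⟨p, q⟩, hpq⟩
    · simp [hempty]
    refine (Finset.card_le_card (t := {(p, q), (q, p)}) ?_).trans Finset.card_le_two
    rintro ⟨r, s⟩ hrs
    simp only [Finset.mem_filter, Finset.mem_product, mem_excessClass] at hpq hrs
    simpa only [Finset.mem_insert, Finset.mem_singleton, Prod.mk.injEq] using
      nthPrime_mul_nthPrime_inj hrs.1.1.1 hrs.1.2.1 hpq.1.1.1 hpq.1.2.1 (hrs.2.trans hpq.2.symm)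

/-- The parameters of the nonempty classes `excessClass n d`. -/
def excessClassSupport : AddSubsemigroup (ℕ × ℤ) where
  carrier := {p | (excessClass p.1 p.2).Nonempty}
  add_mem' := fun ⟨_, hp⟩ ⟨_, hq⟩ => ⟨_, nthPrime_mul_nthPrime_mem_excessClass hp hq⟩

/-- The logarithm of half the number of trees in a class. The factor one half makes it
superadditive: the two branches of a grafted tree are not ordered. -/
noncomputable def entropy (p : ℕ × ℤ) : ℝ := Real.log ((excessClass p.1 p.2).card / 2)

theorem card_excessClass_eq {p : ℕ × ℤ} (hp : p ∈ excessClassSupport) :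
    ((excessClass p.1 p.2).card : ℝ) = 2 * Real.exp (entropy p) := by
  have : (0 : ℝ) < (excessClass p.1 p.2).card := Nat.cast_pos.mpr hp.card_pos
  rw [entropy, Real.exp_log (by positivity)]
  ring

theorem superadditiveOn_entropy : SuperadditiveOn excessClassSupport entropy := by
  intro p hp q hq
  have hp0 : (0 : ℝ) < (excessClass p.1 p.2).card := Nat.cast_pos.mpr hp.card_pos
  have hq0 : (0 : ℝ) < (excessClass q.1 q.2).card := Nat.cast_pos.mpr hq.card_pos
  have hle : ((excessClass p.1 p.2).card : ℝ) * (excessClass q.1 q.2).card ≤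
      2 * (excessClass (p.1 + q.1) (p.2 + q.2)).card := by
    exact_mod_cast card_excessClass_mul_le p.1 q.1 p.2 q.2
  rw [entropy, entropy, ← Real.log_mul (by positivity) (by positivity)]
  exact Real.log_le_log (by positivity) (by simp only [Prod.fst_add, Prod.snd_add]; linarith)

theorem single_mem_excessClassSupport : ((2, 0) : ℕ × ℤ) ∈ excessClassSupport :=
  ⟨1, mem_excessClass.mpr (by simp [matulaSize_one, matulaLeaves_one])⟩

theorem path_mem_excessClassSupport : ((3, -1) : ℕ × ℤ) ∈ excessClassSupport :=
  ⟨nthPrime 1, mem_excessClass.mpr (by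
    simp [(prime_nthPrime 1).pos, matulaSize_nthPrime, matulaLeaves_nthPrime, matulaSize_one,
      matulaLeaves_one])⟩

theorem star_mem_excessClassSupport : ((5, 1) : ℕ × ℤ) ∈ excessClassSupport := by
  have hp := prime_nthPrime 1
  have hpp := one_lt_mul'' hp.one_lt hp.one_lt
  have hsize := matulaSize_mul hp.ne_zero hp.ne_zero
  have hsize' := matulaSize_mul hp.ne_zero (zero_lt_one.trans hpp).ne'
  have hleaves := matulaLeaves_mul hp.one_lt hp.one_lt
  have hleaves' := matulaLeaves_mul hp.one_lt hpp
  rw [matulaSize_nthPrime one_pos, matulaSize_one] at hsize hsize'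
  rw [matulaLeaves_nthPrime one_pos, matulaLeaves_one] at hleaves hleaves'
  exact ⟨_, mem_excessClass.mpr ⟨Nat.mul_pos hp.pos (zero_lt_one.trans hpp), by omega, by omega⟩⟩

theorem balanced_mem_excessClassSupport {k : ℕ} (hk : 0 < k) :
    ((2 * k, 0) : ℕ × ℤ) ∈ excessClassSupport :=
  nsmul_two_zero k ▸ nsmul_mem_addSubsemigroup single_mem_excessClassSupport hk

theorem eq_two_mul_of_mem_excessClassSupport {n : ℕ} (h : (n, 0) ∈ excessClassSupport) :
    ∃ k, 0 < k ∧ n = 2 * k := by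
  obtain ⟨m, hm⟩ := h
  obtain ⟨hm0, -, hd⟩ := mem_excessClass.mp hm
  exact ⟨matulaLeaves m, matulaLeaves_pos hm0, by simp only at hd; omega⟩

/-- The number of trees in the class `(n, d)` is at most `2 * exp (n * a - d * υ)`; here `υ` is the
Lagrange multiplier of the constraint `d = 0`. -/
def GrowthBound (a υ : ℝ) : Prop :=
  ∀ p ∈ excessClassSupport, entropy p ≤ p.1 * a - p.2 * υ

/-- The right-hand side of `GrowthBound` as an additive function of the class. -/
def growthHom (a υ : ℝ) : ℕ × ℤ →+ ℝ where
  toFun p := p.1 * a - p.2 * υ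
  map_zero' := by simp
  map_add' p q := by
    simp only [Prod.fst_add, Prod.snd_add]
    push_cast
    ring

variable {a b υ ν μ : ℝ}

theorem GrowthBound.card_le (h : GrowthBound a υ) (n : ℕ) (d : ℤ) :
    ((excessClass n d).card : ℝ) ≤ 2 * Real.exp (n * a - d * υ) := by
  rcases (excessClass n d).eq_empty_or_nonempty with he | hne
  · simpa [he] using (Real.exp_pos _).le
  · have hmem : (n, d) ∈ excessClassSupport := hne
    rw [card_excessClass_eq hmem]
    gcongr
    exact h _ hmem

theorem GrowthBound.mono (h : GrowthBound a υ) (hab : a ≤ b) : GrowthBound b υ := fun p hp =>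
  (h p hp).trans (by gcongr)

theorem GrowthBound.convexComb (h : GrowthBound a υ) (h' : GrowthBound b ν) {s t : ℝ} (hs : 0 ≤ s)
    (ht : 0 ≤ t) (hst : s + t = 1) : GrowthBound (s * a + t * b) (s * υ + t * ν) := fun p hp => by
  calc entropy p = s * entropy p + t * entropy p := by rw [← add_mul, hst, one_mul]
    _ ≤ s * (p.1 * a - p.2 * υ) + t * (p.1 * b - p.2 * ν) := by
      gcongr
      exacts [h p hp, h' p hp]
    _ = p.1 * (s * a + t * b) - p.2 * (s * υ + t * ν) := by ring

theorem GrowthBound.of_mem_Icc (h : GrowthBound a υ) (h' : GrowthBound a ν)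
    (hμ : μ ∈ Set.Icc υ ν) : GrowthBound a μ := fun p hp => by
  rcases le_total (0 : ℝ) p.2 with hd | hd
  · exact (h' p hp).trans (by gcongr; exact hμ.2)
  · exact (h p hp).trans (by linarith [mul_le_mul_of_nonpos_left hμ.1 hd])

theorem treeWeight_exp {n : ℕ} {d : ℤ} {m : ℕ} (hm : m ∈ excessClass n d) (a υ : ℝ) :
    treeWeight (Real.exp (-(a + υ))) (Real.exp (2 * υ)) m =
      Real.exp (a + υ) * Real.exp (-(n * a - d * υ)) := by
  obtain ⟨hm0, rfl, rfl⟩ := mem_excessClass.mp hm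
  rw [treeWeight, if_neg hm0.ne', ← Real.exp_nat_mul, ← Real.exp_nat_mul, ← Real.exp_add,
    ← Real.exp_add]
  push_cast
  ring_nf

theorem growthBound_of_summable
    (hs : Summable (treeWeight (Real.exp (-(a + υ))) (Real.exp (2 * υ)))) : GrowthBound a υ := by
  set T := ∑' m, treeWeight (Real.exp (-(a + υ))) (Real.exp (2 * υ)) m
  refine superadditiveOn_entropy.le_of_le_const_add (φ := growthHom a υ)
    (C := Real.log (T / 2) - (a + υ)) fun p hp => ?_
  have hT : 2 * Real.exp (entropy p + (a + υ) - growthHom a υ p) ≤ T := calc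
    _ = ∑ _ ∈ excessClass p.1 p.2, Real.exp (a + υ) * Real.exp (-growthHom a υ p) := by
      rw [Finset.sum_const, nsmul_eq_mul, card_excessClass_eq hp, sub_eq_add_neg, Real.exp_add,
        Real.exp_add]
      ring
    _ = ∑ m ∈ excessClass p.1 p.2, treeWeight (Real.exp (-(a + υ))) (Real.exp (2 * υ)) m :=
      Finset.sum_congr rfl fun _ hm => (treeWeight_exp hm a υ).symm
    _ ≤ T := hs.sum_le_tsum _ fun _ _ =>
      treeWeight_nonneg (Real.exp_pos _).le (Real.exp_pos _).le _
  have hpos := Real.exp_pos (entropy p + (a + υ) - growthHom a υ p)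
  linarith [(Real.le_log_iff_exp_le (by linarith)).mpr
    (show Real.exp (entropy p + (a + υ) - growthHom a υ p) ≤ T / 2 by linarith)]

theorem aCount_eq_zero {n k : ℕ} (h : n < k) : aCount n k = 0 := by
  rw [aCount_eq_card, Nat.card_eq_zero]
  refine Or.inl ⟨fun ⟨m, _, hn, hk⟩ => ?_⟩
  have := matulaLeaves_le_matulaSize m
  omega

theorem summable_geometric_of_le {r : ℝ} (hr : 0 ≤ r) (hr1 : r < 1) :
    Summable fun p : ℕ × ℕ => if p.2 ≤ p.1 then r ^ p.1 else 0 := by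
  have hsqrt := summable_geometric_of_lt_one (Real.sqrt_nonneg r)
    ((Real.sqrt_lt' one_pos).mpr (by simpa using hr1))
  refine (hsqrt.mul_of_nonneg hsqrt (fun _ => by positivity) fun _ => by positivity).of_nonneg_of_le
    (fun p => by positivity) fun p => ?_
  split_ifs with h
  · calc r ^ p.1 = √r ^ p.1 * √r ^ p.1 := by rw [← mul_pow, Real.mul_self_sqrt hr]
      _ ≤ √r ^ p.1 * √r ^ p.2 := by
        gcongr ?_ * ?_
        exact pow_le_pow_of_le_one (Real.sqrt_nonneg r) (Real.sqrt_le_one.mpr hr1.le) h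
  · positivity

theorem GrowthBound.summable (h : GrowthBound a υ) (hab : a < b) :
    Summable (treeWeight (Real.exp (-(b + υ))) (Real.exp (2 * υ))) := by
  rw [← summable_aCount_iff (Real.exp_pos _).le (Real.exp_pos _).le]
  refine ((summable_geometric_of_le (Real.exp_pos (a - b)).le
    (Real.exp_lt_one_iff.mpr (sub_neg.mpr hab))).mul_left (2 * Real.exp (a + υ))).of_nonneg_of_le
    (fun p => by positivity) fun ⟨n, k⟩ => ?_
  dsimp only
  split_ifs with hkn
  · calc (aCount n k : ℝ) * Real.exp (-(b + υ)) ^ n * Real.exp (2 * υ) ^ k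
        ≤ 2 * Real.exp ((n + 1 : ℕ) * a - (2 * k - (n + 1) : ℤ) * υ) *
            Real.exp (-(b + υ)) ^ n * Real.exp (2 * υ) ^ k := by
          rw [aCount_eq_card_excessClass]
          gcongr
          exact h.card_le _ _
      _ = 2 * Real.exp (a + υ) * Real.exp (a - b) ^ n := by
          simp only [mul_assoc, ← Real.exp_nat_mul, ← Real.exp_add]
          push_cast
          ring_nf
  · simp [aCount_eq_zero (not_le.mp hkn)]

theorem treeWeight_div_eq {w u : ℝ} (hw : 0 < w) (hu : 0 < u) : treeWeight (w / u) (u ^ 2) =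
    treeWeight (Real.exp (-(-Real.log w + Real.log u))) (Real.exp (2 * Real.log u)) := by
  rw [neg_add, neg_neg, ← sub_eq_add_neg, Real.exp_sub, two_mul, Real.exp_add, Real.exp_log hw,
    Real.exp_log hu, sq]

theorem growthBound_of_summable_div {w u : ℝ} (hw : 0 < w) (hu : 0 < u)
    (hs : Summable (treeWeight (w / u) (u ^ 2))) : GrowthBound (-Real.log w) (Real.log u) :=
  growthBound_of_summable (treeWeight_div_eq hw hu ▸ hs)

theorem GrowthBound.summable_div {w u : ℝ} (hw : 0 < w) (hu : 0 < u)
    (h : GrowthBound a (Real.log u)) (ha : a < -Real.log w) :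
    Summable (treeWeight (w / u) (u ^ 2)) :=
  treeWeight_div_eq hw hu ▸ h.summable ha

end Growth

section Optimum

variable {a b υ ν : ℝ}

/-- The exponents `a` for which some multiplier gives a `GrowthBound`; the least one is the
exponential growth rate of the balanced trees. -/
def growthExponents : Set ℝ := {a | ∃ υ, GrowthBound a υ}

theorem entropy_zero : entropy 0 = 0 := by
  have : excessClass 0 0 = ∅ := Finset.eq_empty_of_forall_notMem fun m hm =>
    absurd (mem_excessClass.mp hm).2.1 (Nat.succ_ne_zero _)
  simp [entropy, this]

theorem subadditive_neg_entropy : Subadditive fun k : ℕ => -entropy (2 * k, 0) := by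
  intro m n
  rcases Nat.eq_zero_or_pos m with rfl | hm
  · simp [show ((0, 0) : ℕ × ℤ) = 0 from rfl, entropy_zero]
  rcases Nat.eq_zero_or_pos n with rfl | hn
  · simp [show ((0, 0) : ℕ × ℤ) = 0 from rfl, entropy_zero]
  have hadd := superadditiveOn_entropy (balanced_mem_excessClassSupport hm)
    (balanced_mem_excessClassSupport hn)
  rw [Prod.mk_add_mk, add_zero, ← mul_add] at hadd
  linarith

theorem GrowthBound.neg_two_mul_le (h : GrowthBound a υ) {k : ℕ} (hk : 0 < k) :
    -(2 * a) ≤ -entropy (2 * k, 0) / k := by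
  have hle := h _ (balanced_mem_excessClassSupport hk)
  rw [le_div_iff₀ (Nat.cast_pos.mpr hk)]
  push_cast at hle
  linarith

theorem GrowthBound.bddBelow (h : GrowthBound a υ) :
    BddBelow (Set.range fun k : ℕ => -entropy (2 * k, 0) / (k : ℝ)) := by
  refine ⟨min (-(2 * a)) 0, Set.forall_mem_range.mpr fun k => ?_⟩
  rcases Nat.eq_zero_or_pos k with rfl | hk
  · simp
  · exact (min_le_left _ _).trans (h.neg_two_mul_le hk)

theorem exists_growthBound_of_balanced
    (h : ∀ k : ℕ, 0 < k → entropy (2 * k, 0) ≤ (2 * k : ℕ) * a) : ∃ υ, GrowthBound a υ := by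
  obtain ⟨υ, hυ⟩ := (superadditiveOn_entropy.sub_addMonoidHom (growthHom a 0)).exists_slope
    (d := AddMonoidHom.snd ℕ ℤ) ⟨_, path_mem_excessClassSupport, by simp⟩
    ⟨_, star_mem_excessClassSupport, by simp⟩ (by
      rintro ⟨n, _⟩ hp rfl
      obtain ⟨k, hk, rfl⟩ := eq_two_mul_of_mem_excessClassSupport hp
      simpa [growthHom] using h k hk)
  refine ⟨-υ, fun p hp => ?_⟩
  have hle := hυ p hp
  simp only [growthHom, AddMonoidHom.coe_mk, ZeroHom.coe_mk, AddMonoidHom.coe_snd] at hle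
  linarith

theorem exists_isLeast_growthExponents (h : growthExponents.Nonempty) :
    ∃ a, IsLeast growthExponents a ∧
      Filter.Tendsto (fun k : ℕ => entropy (2 * k, 0) / k) Filter.atTop (nhds (2 * a)) := by
  obtain ⟨b, ν, hb⟩ := h
  have hlim := subadditive_neg_entropy.tendsto_lim hb.bddBelow
  set l := subadditive_neg_entropy.lim
  refine ⟨-l / 2, ⟨exists_growthBound_of_balanced fun k hk => ?_, ?_⟩, ?_⟩
  · have hle := subadditive_neg_entropy.lim_le_div hb.bddBelow hk.ne'
    rw [le_div_iff₀ (Nat.cast_pos.mpr hk)] at hle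
    push_cast
    linarith
  · rintro c ⟨μ, hc⟩
    have hle : -(2 * c) ≤ l := ge_of_tendsto hlim <|
      (Filter.eventually_gt_atTop 0).mono fun k hk => hc.neg_two_mul_le hk
    linarith
  · convert hlim.neg using 2
    · ring
    · ring

theorem mul_sqrt_le_exp_neg (ha : a ∈ lowerBounds growthExponents) {x ζ : ℝ} (hx : 0 < x)
    (hζ : 0 < ζ)
    (hs : Summable fun p : ℕ × ℕ => (aCount p.1 p.2 : ℝ) * x ^ p.1 * ζ ^ p.2) :
    x * √ζ ≤ Real.exp (-a) := by
  have hu : 0 < √ζ := Real.sqrt_pos.mpr hζ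
  have hs' : Summable (treeWeight (x * √ζ / √ζ) (√ζ ^ 2)) := by
    rwa [mul_div_cancel_right₀ x hu.ne', Real.sq_sqrt hζ.le, ← summable_aCount_iff hx.le hζ.le]
  have hle := ha ⟨_, growthBound_of_summable_div (mul_pos hx hu) hu hs'⟩
  rw [← Real.log_le_iff_le_exp (mul_pos hx hu)]
  linarith

theorem rFun_mul_sqrt_le (ha : a ∈ lowerBounds growthExponents) {ζ : ℝ} (hζ : 0 < ζ) :
    rFun ζ * √ζ ≤ Real.exp (-a) := by
  have hu : 0 < √ζ := Real.sqrt_pos.mpr hζ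
  rw [← le_div_iff₀ hu]
  exact Real.sSup_le (fun x hx => (le_div_iff₀ hu).mpr (mul_sqrt_le_exp_neg ha hx.1 hζ hx.2))
    (by positivity)

theorem le_rFun (ha : a ∈ lowerBounds growthExponents) {x ζ : ℝ} (hx : 0 < x) (hζ : 0 < ζ)
    (hs : Summable (treeWeight x ζ)) : x ≤ rFun ζ :=
  le_csSup ⟨Real.exp (-a) / √ζ, fun _ hy =>
    (le_div_iff₀ (Real.sqrt_pos.mpr hζ)).mpr (mul_sqrt_le_exp_neg ha hy.1 hζ hy.2)⟩
    ⟨hx, (summable_aCount_iff hx.le hζ.le).mpr hs⟩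

theorem xZero_eq (ha : IsLeast growthExponents a) : xZero = Real.exp (-a) := by
  obtain ⟨⟨υ, hυ⟩, hmin⟩ := ha
  have hu := Real.exp_pos υ
  have hle : Real.exp (-a) ≤ rFun (Real.exp υ ^ 2) * √(Real.exp υ ^ 2) := by
    rw [Real.sqrt_sq hu.le, ← div_le_iff₀ hu]
    refine le_of_forall_lt_imp_le_of_dense fun x hx => ?_
    rcases le_or_gt x 0 with hx0 | hx0
    · exact hx0.trans (Real.sSup_nonneg fun y hy => hy.1.le)
    refine le_rFun hmin hx0 (pow_pos hu 2) ?_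
    rw [← mul_div_cancel_right₀ x hu.ne']
    refine GrowthBound.summable_div (a := a) (mul_pos hx0 hu) hu (by rwa [Real.log_exp]) ?_
    rwa [lt_neg, Real.log_lt_iff_lt_exp (mul_pos hx0 hu), ← lt_div_iff₀ hu]
  refine IsGreatest.csSup_eq ⟨⟨_, pow_pos hu 2, hle.antisymm ?_⟩, ?_⟩
  · exact rFun_mul_sqrt_le hmin (pow_pos hu 2)
  · rintro y ⟨ζ, hζ, rfl⟩
    exact rFun_mul_sqrt_le hmin hζ

end Optimum

section Localization

variable {a υ : ℝ}

theorem neg_log_le_of_not_summable {w u : ℝ} (hw : 0 < w) (hu : 0 < u)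
    (hns : ¬Summable (treeWeight (w / u) (u ^ 2))) (h : GrowthBound a (Real.log u)) :
    -Real.log w ≤ a :=
  not_lt.mp fun hlt => hns (h.summable_div hw hu hlt)

theorem growthBound_middle : GrowthBound (-Real.log 0.34253848209) (Real.log 1.21857) :=
  growthBound_of_summable_div (by norm_num) (by norm_num) summable_treeWeight_middle

theorem growthBound_far_right : GrowthBound (-Real.log 0.34253848137) (Real.log 1.21867) :=
  growthBound_of_summable_div (by norm_num) (by norm_num) summable_treeWeight_far_right

theorem multiplier_mem_Ioo (ha : a ∈ lowerBounds growthExponents) (h : GrowthBound a υ) :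
    υ ∈ Set.Ioo (Real.log 1.21853) (Real.log 1.21862) := by
  have hmiddle := h.mono (ha ⟨_, growthBound_middle⟩)
  constructor <;> by_contra! hυ
  · have hleft := neg_log_le_of_not_summable (by norm_num) (by norm_num)
      not_summable_treeWeight_left
      (hmiddle.of_mem_Icc growthBound_middle ⟨hυ, Real.log_le_log (by norm_num) (by norm_num)⟩)
    linarith [Real.log_lt_log (by norm_num : (0 : ℝ) < 0.34253848203)
      (by norm_num : (0.34253848203 : ℝ) < 0.34253848209)]
  · have hright := neg_log_le_of_not_summable (by norm_num) (by norm_num)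
      not_summable_treeWeight_right
      (growthBound_middle.of_mem_Icc hmiddle ⟨Real.log_le_log (by norm_num) (by norm_num), hυ⟩)
    linarith [Real.log_lt_log (by norm_num : (0 : ℝ) < 0.34253848199)
      (by norm_num : (0.34253848199 : ℝ) < 0.34253848209)]

theorem exp_lt_of_mem_lowerBounds (ha : a ∈ lowerBounds growthExponents) :
    Real.exp a < 2.91939 := by
  have hle := ha ⟨_, growthBound_middle⟩
  have hlog : -Real.log 0.34253848209 < Real.log 2.91939 := by
    rw [← Real.log_inv]
    exact Real.log_lt_log (by norm_num) (by norm_num)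
  exact (Real.lt_log_iff_exp_lt (by norm_num)).mp (hle.trans_lt hlog)

theorem GrowthBound.of_mem_Icc_convexComb {b ν μ s t : ℝ} (h : GrowthBound a υ)
    (h' : GrowthBound b ν) (hab : a ≤ b) (hs : 0 ≤ s) (ht : 0 ≤ t) (hst : s + t = 1)
    (hμ : μ ∈ Set.Icc υ (s * υ + t * ν)) : GrowthBound (s * a + t * b) μ := by
  have hle : a ≤ s * a + t * b := by
    rw [← eq_sub_iff_add_eq'] at hst
    subst hst
    nlinarith
  exact (h.mono hle).of_mem_Icc (h.convexComb h' hs ht hst) hμ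

-- The optimal multiplier `υ` is only known to lie in an interval, so no certificate bounds `a` from
-- below directly. By convexity, a small `a` at `υ` and the bound at `log 1.21867` would give a
-- bound at `log 1.21862` which is too good.
theorem lt_exp_of_isLeast (ha : IsLeast growthExponents a) : 2.91938 < Real.exp a := by
  obtain ⟨⟨υ, hυ⟩, hmin⟩ := ha
  obtain ⟨hlt, hgt⟩ := multiplier_mem_Ioo hmin hυ
  have hconvex : Real.log 1.21862 ≤ 1 / 3 * υ + 2 / 3 * Real.log 1.21867 := by
    have := Real.log_le_log (by norm_num)
      (by norm_num : (1.21862 : ℝ) ^ 3 ≤ 1.21853 * 1.21867 ^ 2)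
    rw [Real.log_mul (by norm_num) (by norm_num), Real.log_pow, Real.log_pow] at this
    push_cast at this
    linarith
  have hchord := neg_log_le_of_not_summable (by norm_num) (by norm_num)
    not_summable_treeWeight_right
    (hυ.of_mem_Icc_convexComb growthBound_far_right (hmin ⟨_, growthBound_far_right⟩)
      (by norm_num) (by norm_num) (by norm_num) ⟨hgt.le, hconvex⟩)
  have hlog : Real.log 2.91938 + 3 * Real.log 0.34253848199 < 2 * Real.log 0.34253848137 := by
    have := Real.log_lt_log (by norm_num)
      (by norm_num : (2.91938 : ℝ) * 0.34253848199 ^ 3 < 0.34253848137 ^ 2)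
    rw [Real.log_mul (by norm_num) (by norm_num), Real.log_pow, Real.log_pow] at this
    exact_mod_cast this
  exact (Real.log_lt_iff_lt_exp (by norm_num)).mp (by linarith)

end Localization

section Limit

variable {a υ : ℝ}

theorem exists_balanced_add_mem_excessClassSupport {n : ℕ} (hn : 5 < n) :
    ∃ p ∈ excessClassSupport, ∃ j ∈ Finset.range n,
      (p = (5, 1) ∨ p = (6, 0)) ∧ (2 * (n / 2 - 2), 0) + p = (n + 1, (j : ℤ)) := by
  rcases Nat.even_or_odd' n with ⟨k, rfl | rfl⟩
  · refine ⟨(5, 1), star_mem_excessClassSupport, 1, Finset.mem_range.mpr (by omega), Or.inl rfl,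
      Prod.ext ?_ rfl⟩
    simp only [Prod.fst_add]
    omega
  · refine ⟨(6, 0), balanced_mem_excessClassSupport (k := 3) (by norm_num), 0,
      Finset.mem_range.mpr (by omega), Or.inr rfl, Prod.ext ?_ rfl⟩
    simp only [Prod.fst_add]
    omega

theorem entropy_le_log_aPlusN {n j : ℕ} (hj : j ∈ Finset.range n)
    (hmem : ((n + 1, (j : ℤ)) : ℕ × ℤ) ∈ excessClassSupport) :
    entropy (n + 1, j) ≤ Real.log (aPlusN n) := by
  have hpos : (0 : ℝ) < (excessClass (n + 1) j).card := Nat.cast_pos.mpr hmem.card_pos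
  have hle : ((excessClass (n + 1) j).card : ℝ) ≤ aPlusN n := by
    rw [aPlusN_eq_sum]
    exact_mod_cast Finset.single_le_sum (f := fun j : ℕ => (excessClass (n + 1) j).card)
      (fun _ _ => Nat.zero_le _) hj
  exact Real.log_le_log (half_pos hpos) (by linarith)

theorem entropy_add_le_log_aPlusN {n : ℕ} (hn : 5 < n) :
    entropy (2 * (n / 2 - 2), 0) + min (entropy (5, 1)) (entropy (6, 0)) ≤
      Real.log (aPlusN n) := by
  obtain ⟨p, hp, j, hj, hp', hsum⟩ := exists_balanced_add_mem_excessClassSupport hn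
  have hbalanced := balanced_mem_excessClassSupport (show 0 < n / 2 - 2 by omega)
  have hadd := superadditiveOn_entropy hbalanced hp
  have hmem := excessClassSupport.add_mem hbalanced hp
  rw [hsum] at hadd hmem
  refine le_trans ?_ (hadd.trans (entropy_le_log_aPlusN hj hmem))
  gcongr
  rcases hp' with rfl | rfl
  exacts [min_le_left _ _, min_le_right _ _]

theorem aPlusN_pos {n : ℕ} (hn : 5 < n) : 0 < aPlusN n := by
  obtain ⟨p, hp, j, hj, -, hsum⟩ := exists_balanced_add_mem_excessClassSupport hn
  have hmem := excessClassSupport.add_mem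
    (balanced_mem_excessClassSupport (show 0 < n / 2 - 2 by omega)) hp
  rw [hsum] at hmem
  rw [aPlusN_eq_sum]
  exact Finset.sum_pos' (fun _ _ => Nat.zero_le _) ⟨j, hj, Finset.Nonempty.card_pos hmem⟩

theorem GrowthBound.log_aPlusN_le (h : GrowthBound a υ) (hυ : 0 ≤ υ) {n : ℕ} (hn : 5 < n) :
    Real.log (aPlusN n) ≤ Real.log n + Real.log 2 + (n + 1) * a := by
  have hle : (aPlusN n : ℝ) ≤ n * 2 * Real.exp ((n + 1) * a) := calc
    (aPlusN n : ℝ) ≤ ∑ _j ∈ Finset.range n, 2 * Real.exp ((n + 1) * a) := by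
      rw [aPlusN_eq_sum, Nat.cast_sum]
      refine Finset.sum_le_sum fun j _ => (h.card_le _ _).trans ?_
      push_cast
      gcongr
      exact sub_le_self _ (by positivity)
    _ = n * 2 * Real.exp ((n + 1) * a) := by simp [mul_assoc]
  have hn0 : (n : ℝ) ≠ 0 := Nat.cast_ne_zero.mpr (by omega)
  rw [← Real.log_mul hn0 two_ne_zero, ← Real.log_exp ((n + 1) * a),
    ← Real.log_mul (by positivity) (Real.exp_ne_zero _)]
  exact Real.log_le_log (Nat.cast_pos.mpr (aPlusN_pos hn)) hle

theorem tendsto_half_sub_div_nat :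
    Filter.Tendsto (fun n : ℕ => ((n / 2 - 2 : ℕ) : ℝ) / n) Filter.atTop (nhds (1 / 2)) := by
  have hlower : Filter.Tendsto (fun n : ℕ => 1 / 2 - 3 / (n : ℝ)) Filter.atTop (nhds (1 / 2)) := by
    simpa only [sub_zero] using
      (tendsto_const_div_atTop_nhds_zero_nat (3 : ℝ)).const_sub (1 / 2)
  refine tendsto_of_tendsto_of_tendsto_of_le_of_le' hlower tendsto_const_nhds ?_ ?_ <;>
    filter_upwards [Filter.eventually_gt_atTop 0] with n hn
  · have : (n : ℝ) ≤ 2 * (n / 2 - 2 : ℕ) + 6 := by exact_mod_cast (by omega)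
    have hn0 : (0 : ℝ) < n := Nat.cast_pos.mpr hn
    rw [le_div_iff₀ hn0, sub_mul, div_mul_cancel₀ _ hn0.ne']
    linarith
  · have : 2 * ((n / 2 - 2 : ℕ) : ℝ) ≤ n := by exact_mod_cast (by omega)
    rw [div_le_iff₀ (Nat.cast_pos.mpr hn)]
    linarith

theorem tendsto_entropy_add_div
    (hlim : Filter.Tendsto (fun k : ℕ => entropy (2 * k, 0) / k) Filter.atTop (nhds (2 * a)))
    (c : ℝ) : Filter.Tendsto (fun n : ℕ => (entropy (2 * (n / 2 - 2), 0) + c) / n)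
      Filter.atTop (nhds a) := by
  have hhalf : Filter.Tendsto (fun n : ℕ => n / 2 - 2) Filter.atTop Filter.atTop :=
    (Filter.tendsto_sub_atTop_nat 2).comp (Nat.tendsto_div_const_atTop two_ne_zero)
  have hprod := ((hlim.comp hhalf).mul tendsto_half_sub_div_nat).add
    (tendsto_const_div_atTop_nhds_zero_nat c)
  rw [add_zero, mul_one_div, mul_div_cancel_left₀ a two_ne_zero] at hprod
  refine hprod.congr' ?_
  filter_upwards [Filter.eventually_gt_atTop 5] with n hn
  have hk : ((n / 2 - 2 : ℕ) : ℝ) ≠ 0 := Nat.cast_ne_zero.mpr (by omega)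
  rw [Function.comp_apply, div_mul_div_cancel₀ hk, add_div]

theorem tendsto_log_add_mul_div (c a : ℝ) :
    Filter.Tendsto (fun n : ℕ => (Real.log n + c + (n + 1) * a) / n) Filter.atTop (nhds a) := by
  have hlog : Filter.Tendsto (fun n : ℕ => Real.log n / n) Filter.atTop (nhds 0) :=
    Real.isLittleO_log_id_atTop.tendsto_div_nhds_zero.comp tendsto_natCast_atTop_atTop
  have hsum := (hlog.add (tendsto_const_div_atTop_nhds_zero_nat (c + a))).add_const a
  rw [add_zero, zero_add] at hsum
  refine hsum.congr' ?_
  filter_upwards [Filter.eventually_gt_atTop 0] with n hn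
  have hn0 : (n : ℝ) ≠ 0 := Nat.cast_ne_zero.mpr hn.ne'
  field_simp
  ring

theorem tendsto_log_aPlusN_div (h : GrowthBound a υ) (hυ : 0 ≤ υ)
    (hlim : Filter.Tendsto (fun k : ℕ => entropy (2 * k, 0) / k) Filter.atTop (nhds (2 * a))) :
    Filter.Tendsto (fun n : ℕ => Real.log (aPlusN n) / n) Filter.atTop (nhds a) := by
  refine tendsto_of_tendsto_of_tendsto_of_le_of_le'
    (tendsto_entropy_add_div hlim (min (entropy (5, 1)) (entropy (6, 0))))
    (tendsto_log_add_mul_div (Real.log 2) a) ?_ ?_ <;>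
    filter_upwards [Filter.eventually_gt_atTop 5] with n hn
  · gcongr
    exact entropy_add_le_log_aPlusN hn
  · gcongr
    exact h.log_aPlusN_le hυ hn

theorem tendsto_aPlusN_rpow
    (h : Filter.Tendsto (fun n : ℕ => Real.log (aPlusN n) / n) Filter.atTop (nhds a)) :
    Filter.Tendsto (fun n : ℕ => (aPlusN n : ℝ) ^ (1 / (n : ℝ))) Filter.atTop
      (nhds (Real.exp a)) := by
  refine ((Real.continuous_exp.tendsto a).comp h).congr' ?_
  filter_upwards [Filter.eventually_gt_atTop 5] with n hn
  rw [Real.rpow_def_of_pos (Nat.cast_pos.mpr (aPlusN_pos hn)), mul_one_div, Function.comp_apply]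

end Limit

/-- Theorem 6: `(Σ_{k>n/2} a_{n,k})^{1/n} → 1/x₀ = 2.9193800…`. -/
theorem theorem6 :
    Filter.Tendsto (fun n : ℕ => (aPlusN n : ℝ) ^ (1 / (n : ℝ)))
      Filter.atTop (nhds (1 / xZero)) ∧
    2.91938 < 1 / xZero ∧ 1 / xZero < 2.91939 := by
  obtain ⟨a, ha, hlim⟩ := exists_isLeast_growthExponents ⟨_, _, growthBound_middle⟩
  have hinv : 1 / xZero = Real.exp a := by
    rw [xZero_eq ha, Real.exp_neg, one_div, inv_inv]
  rw [hinv]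
  obtain ⟨υ, hυ⟩ := ha.1
  have hυ0 : 0 ≤ υ := (Real.log_nonneg (by norm_num)).trans (multiplier_mem_Ioo ha.2 hυ).1.le
  exact ⟨tendsto_aPlusN_rpow (tendsto_log_aPlusN_div hυ hυ0 hlim),
    lt_exp_of_isLeast ha, exp_lt_of_mem_lowerBounds ha.2⟩
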